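/- arXiv:2404.11444 — 11 statements merged into one kernel-verified Lean document; each statement's English description precedes it below -/
import Mathlib

section
/- Let m, j be positive natural numbers and let σ be a permutation of the set (Fin m) × (Fin j), thought of as the positions of a rectangle with m columns each containing j cells. Then there exists a marking function f : (Fin m) × (Fin j) → Fin j such that: (i) for every column c : Fin m, the map r ↦ f (c, r) is a bijection of Fin j (each column carries every marker exactly once), and (ii) for every column c' : Fin m, the map r ↦ f (σ (c', r)) is a bijection of Fin j (the images under σ of the cells of each column carry every marker exactly once). -/
/-!
The cells are the edges of a bipartite multigraph: the cell `x` joins its own column `x.1` to the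
column `(σ⁻¹ x).1` it comes from. This multigraph is `j`-regular, and a marking with the two
required properties is exactly a proper edge colouring with `j` colours. Such a colouring
exists by König's theorem (`exists_edge_coloring`), proved by induction on the degree: Hall's
marriage theorem yields a perfect matching (`exists_perfect_matching`), which receives the last
colour and whose removal lowers every degree by one.
-/

/-- A regular bipartite multigraph of positive degree has a perfect matching. The edge set is `S`,
with endpoint maps `a` and `b` to two copies of `V`; the matching is given as the edge `e v`
at each left vertex `v`. -/
lemma exists_perfect_matching {E V : Type*} [DecidableEq V] [Fintype V]
    (a b : E → V) (k : ℕ) (S : Finset E)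
    (ha : ∀ v, (S.filter fun x => a x = v).card = k + 1)
    (hb : ∀ v, (S.filter fun x => b x = v).card = k + 1) :
    ∃ e : V → E, (∀ v, e v ∈ S) ∧ (∀ v, a (e v) = v) ∧
      Function.Bijective fun v => b (e v) := by
  have count : ∀ (c : E → V), (∀ v, (S.filter fun x => c x = v).card = k + 1) →
      ∀ A : Finset V, (S.filter fun x => c x ∈ A).card = A.card * (k + 1) := by
    intro c hc A
    rw [Finset.card_eq_sum_card_fiberwise (f := c) (t := A) (by intro x hx; simp_all)]
    rw [Finset.sum_congr rfl (g := fun _ => k + 1), Finset.sum_const, smul_eq_mul]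
    intro v hv
    rw [← hc v, Finset.filter_filter]
    congr 1
    ext x
    simp only [Finset.mem_filter]
    grind
  -- Hall's condition: the edges leaving `A` are among those entering its neighbourhood.
  have hall : ∀ A : Finset V,
      A.card ≤ (A.biUnion fun v => (S.filter fun x => a x = v).image b).card := by
    intro A
    have h : (S.filter fun x => a x ∈ A) ⊆
        S.filter fun x => b x ∈ A.biUnion fun v => (S.filter fun x => a x = v).image b := by
      intro x hx
      simp only [Finset.mem_filter, Finset.mem_biUnion, Finset.mem_image] at hx ⊢
      exact ⟨hx.1, a x, hx.2, x, ⟨hx.1, rfl⟩, rfl⟩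
    have h' := Finset.card_le_card h
    rw [count a ha, count b hb] at h'
    exact Nat.le_of_mul_le_mul_right h' (Nat.succ_pos k)
  obtain ⟨g, hg, hgt⟩ := (Finset.all_card_le_biUnion_card_iff_exists_injective _).1 hall
  simp only [Finset.mem_image, Finset.mem_filter] at hgt
  choose e he heg using hgt
  refine ⟨e, fun v => (he v).1, fun v => (he v).2, ?_⟩
  simp only [heg]
  exact Finite.injective_iff_bijective.1 hg

/-- König's edge colouring theorem for a `k`-regular bipartite multigraph with edge set `S` and
endpoint maps `a` and `b`. Colours are natural numbers below `k`. -/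
lemma exists_edge_coloring {E V : Type*} [DecidableEq E] [DecidableEq V] [Fintype V]
    (a b : E → V) (k : ℕ) (S : Finset E)
    (ha : ∀ v, (S.filter fun x => a x = v).card = k)
    (hb : ∀ v, (S.filter fun x => b x = v).card = k) :
    ∃ f : E → ℕ, (∀ x ∈ S, f x < k) ∧
      ∀ x ∈ S, ∀ y ∈ S, f x = f y → (a x = a y ∨ b x = b y) → x = y := by
  induction k generalizing S with
  | zero =>
    have hS : ∀ x, x ∉ S := by
      intro x hx
      have := Finset.card_eq_zero.1 (ha (a x))
      have hm : x ∈ S.filter fun y => a y = a x := by simp [hx]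
      simp [this] at hm
    exact ⟨fun _ => 0, fun x hx => absurd hx (hS x), fun x hx => absurd hx (hS x)⟩
  | succ k ih =>
    obtain ⟨e, heS, hea, heb⟩ := exists_perfect_matching a b k S ha hb
    -- Any endpoint map that is bijective on the matching loses one edge in each fibre.
    have drop : ∀ c : E → V, (∀ v, (S.filter fun x => c x = v).card = k + 1) →
        (Function.Bijective fun v => c (e v)) →
        ∀ v, ((S \ Finset.univ.image e).filter fun x => c x = v).card = k := by
      intro c hc hce v
      obtain ⟨w, hw⟩ := hce.2 v
      have h : (S \ Finset.univ.image e).filter (fun x => c x = v) =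
          (S.filter fun x => c x = v).erase (e w) := by
        ext x
        simp only [Finset.mem_filter, Finset.mem_sdiff, Finset.mem_image, Finset.mem_univ,
          true_and, Finset.mem_erase, not_exists]
        constructor
        · rintro ⟨⟨h1, h2⟩, h3⟩
          exact ⟨fun h => h2 w h.symm, h1, h3⟩
        · rintro ⟨h1, h2, h3⟩
          refine ⟨⟨h2, fun u hu => h1 ?_⟩, h3⟩
          have : u = w := hce.1 (by simp only [hu, h3]; exact hw.symm)
          rw [← hu, this]
      rw [h, Finset.card_erase_of_mem (by simp [heS w]; exact hw), hc v, Nat.add_sub_cancel]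
    obtain ⟨f, hf, hinj⟩ := ih (S \ Finset.univ.image e)
      (drop a ha (by simp only [hea]; exact Function.bijective_id)) (drop b hb heb)
    refine ⟨fun x => if x ∈ Finset.univ.image e then k else f x, ?_, ?_⟩
    · intro x hx
      dsimp only
      split_ifs with h
      · exact Nat.lt_succ_self k
      · exact (hf x (Finset.mem_sdiff.2 ⟨hx, h⟩)).trans (Nat.lt_succ_self k)
    · intro x hx y hy hxy hab
      dsimp only at hxy
      split_ifs at hxy with h1 h2 h2
      · obtain ⟨u, -, rfl⟩ := Finset.mem_image.1 h1
        obtain ⟨w, -, rfl⟩ := Finset.mem_image.1 h2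
        rcases hab with h | h
        · rw [hea, hea] at h
          rw [h]
        · rw [heb.1 h]
      · exact absurd hxy (hf y (Finset.mem_sdiff.2 ⟨hy, h2⟩)).ne'
      · exact absurd hxy (hf x (Finset.mem_sdiff.2 ⟨hx, h1⟩)).ne
      · exact hinj x (Finset.mem_sdiff.2 ⟨hx, h1⟩) y (Finset.mem_sdiff.2 ⟨hy, h2⟩) hxy hab

/-- For any permutation `σ` of the cells of an `m × j` rectangle (with `m` columns of `j`
cells each), there is a marking `f` of the cells by markers in `Fin j` such that every
column carries every marker exactly once, and for every column, the images under `σ` of its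
cells carry every marker exactly once. -/
theorem rectangle_marking_exists (m j : ℕ) (hm : 0 < m) (hj : 0 < j)
    (σ : Equiv.Perm (Fin m × Fin j)) :
    ∃ f : Fin m × Fin j → Fin j,
      (∀ c : Fin m, Function.Bijective fun r : Fin j => f (c, r)) ∧
      (∀ c' : Fin m, Function.Bijective fun r : Fin j => f (σ (c', r))) := by
  -- Taking a general permutation covers both endpoint maps, via `1` and `σ`.
  have fib : ∀ (τ : Equiv.Perm (Fin m × Fin j)) (v : Fin m),
      (Finset.univ.filter fun x => (τ.symm x).1 = v).card = j := by
    intro τ v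
    have h : (Finset.univ.filter fun x => (τ.symm x).1 = v) =
        Finset.univ.image fun r : Fin j => τ (v, r) := by
      ext x
      simp only [Finset.mem_filter, Finset.mem_univ, true_and, Finset.mem_image]
      constructor
      · rintro rfl
        exact ⟨(τ.symm x).2, by simp⟩
      · rintro ⟨r, rfl⟩
        simp
    rw [h, Finset.card_image_of_injective, Finset.card_univ, Fintype.card_fin]
    intro r s hrs
    simpa using hrs
  obtain ⟨f, hf, hinj⟩ := exists_edge_coloring (fun x : Fin m × Fin j => x.1)
    (fun x => (σ.symm x).1) j Finset.univ (fib 1) (fib σ)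
  refine ⟨fun x => ⟨f x, hf x (Finset.mem_univ x)⟩, fun c => ?_, fun c => ?_⟩
  · refine Finite.injective_iff_bijective.1 fun r s hrs => ?_
    have := hinj (c, r) (Finset.mem_univ _) (c, s) (Finset.mem_univ _)
      (by simpa using hrs) (Or.inl rfl)
    simpa using this
  · refine Finite.injective_iff_bijective.1 fun r s hrs => ?_
    have := hinj (σ (c, r)) (Finset.mem_univ _) (σ (c, s)) (Finset.mem_univ _)
      (by simpa using hrs) (Or.inr (by simp))
    simpa using this
end

section
/- Let d be a positive natural number and let P_S, P_A be d × d complex matrices that are Hermitian idempotents (orthogonal projections) with P_S + P_A = 1 and P_S * P_A = 0. Set S = P_S - P_A, and for β : ℝ set S_β = P_S + exp(i π β) • P_A. Let σ > 0 and let γ be the Gaussian probability measure on ℝ with mean 1 and variance σ². Then for every d × d complex matrix ρ, ∫ S_β * ρ * (S_β)ᴴ dγ(β) = p • ρ + (1 - p) • (S * ρ * S), where p = (1 - exp(-π² σ² / 2)) / 2 and (·)ᴴ denotes conjugate transpose. -/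
/-!
Since `|e^{iπβ}| = 1`, conjugating `ρ` by `P_S + e^{iπβ} P_A` gives
`(P_S ρ P_S + P_A ρ P_A) + e^{iπβ} P_A ρ P_S + e^{-iπβ} P_S ρ P_A`.
The characteristic function of the Gaussian at `± π` equals `-q` with `q = e^{-π²σ²/2}`, so averaging
multiplies the off-diagonal blocks by `-q` and leaves the diagonal ones alone. On the other side,
`ρ` and `S ρ S` have the same diagonal blocks and opposite off-diagonal ones, so the mixture with
weights `p` and `1 - p` multiplies the off-diagonal blocks by `2p - 1 = -q`.
-/

open MeasureTheory ProbabilityTheory Matrix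

attribute [local instance] Matrix.normedAddCommGroup Matrix.normedSpace

lemma integrable_cexp_gaussianReal (t : ℝ) (m : ℝ) (v : NNReal) :
    Integrable (fun β : ℝ => Complex.exp (t * β * Complex.I)) (gaussianReal m v) := by
  refine Integrable.of_bound (C := 1) (by fun_prop) (Filter.Eventually.of_forall fun β => ?_)
  rw [← Complex.ofReal_mul, Complex.norm_exp_ofReal_mul_I]

/-- The two signs `ε = ± 1` give the averages of the phases `e^{± iπβ}`; the mean `1` contributes
the factor `e^{± iπ} = -1`. -/
lemma integral_phase_gaussianReal (σ ε : ℝ) (hε : ε = 1 ∨ ε = -1) (v : NNReal)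
    (hv : (v : ℝ) = σ ^ 2) :
    ∫ β : ℝ, Complex.exp ((ε * Real.pi : ℝ) * β * Complex.I) ∂(gaussianReal 1 v)
      = -((Real.exp (-(Real.pi ^ 2 * σ ^ 2) / 2) : ℝ) : ℂ) := by
  rw [← charFun_apply_real, charFun_gaussianReal, sub_eq_add_neg, Complex.exp_add,
    Complex.ofReal_exp, hv]
  have h1 : Complex.exp (((ε * Real.pi : ℝ) : ℂ) * ((1 : ℝ) : ℂ) * Complex.I) = -1 := by
    rcases hε with rfl | rfl
    · simp [Complex.exp_pi_mul_I]
    · simp [Complex.exp_neg, Complex.exp_pi_mul_I]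
  have h2 : -(σ ^ 2 * (ε * Real.pi) ^ 2 / 2) = -(Real.pi ^ 2 * σ ^ 2) / 2 := by
    have hsq : ε ^ 2 = 1 := by rcases hε with rfl | rfl <;> norm_num
    rw [mul_pow, hsq]
    ring
  rw [h1, ← h2]
  push_cast
  ring

/-- Averaging a combination of a constant and two opposite phases. Stating this for an abstract
normed space avoids the clash, on matrices, between the topology of the chosen norm and the
product topology instance. -/
lemma integral_add_phases_gaussianReal {E : Type*} [NormedAddCommGroup E] [NormedSpace ℂ E]
    [CompleteSpace E] (σ : ℝ) (v : NNReal) (hv : (v : ℝ) = σ ^ 2) (A B C : E) :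
    ∫ β : ℝ, (A + Complex.exp ((1 * Real.pi : ℝ) * β * Complex.I) • B
        + Complex.exp ((-1 * Real.pi : ℝ) * β * Complex.I) • C) ∂(gaussianReal 1 v)
      = A + (-((Real.exp (-(Real.pi ^ 2 * σ ^ 2) / 2) : ℝ) : ℂ)) • B
        + (-((Real.exp (-(Real.pi ^ 2 * σ ^ 2) / 2) : ℝ) : ℂ)) • C := by
  have hi1 := (integrable_cexp_gaussianReal (1 * Real.pi) 1 v).smul_const B
  have hi2 := (integrable_cexp_gaussianReal (-1 * Real.pi) 1 v).smul_const C
  have hi3 : Integrable (fun β : ℝ => A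
      + Complex.exp ((1 * Real.pi : ℝ) * β * Complex.I) • B) (gaussianReal 1 v) :=
    (integrable_const A).add hi1
  rw [integral_add hi3 hi2, integral_add (integrable_const A) hi1,
    integral_smul_const, integral_smul_const, integral_phase_gaussianReal σ 1 (Or.inl rfl) v hv,
    integral_phase_gaussianReal σ (-1) (Or.inr rfl) v hv,
    integral_const, probReal_univ, one_smul]

/-- The average for a variance given as any nonnegative real `v` with `v = σ ^ 2`. -/
lemma faulty_swap_average_of_variance {d : ℕ} (PS PA : Matrix (Fin d) (Fin d) ℂ)
    (hPSherm : PS.IsHermitian) (hPAherm : PA.IsHermitian) (hsum : PS + PA = 1)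
    (σ : ℝ) (v : NNReal) (hv : (v : ℝ) = σ ^ 2) (ρ : Matrix (Fin d) (Fin d) ℂ) :
    (∫ β : ℝ,
        (PS + Complex.exp (Complex.I * Real.pi * β) • PA) * ρ *
          (PS + Complex.exp (Complex.I * Real.pi * β) • PA)ᴴ
      ∂(gaussianReal 1 v))
    = ((1 - Real.exp (-(Real.pi ^ 2 * σ ^ 2) / 2)) / 2) • ρ +
        (1 - (1 - Real.exp (-(Real.pi ^ 2 * σ ^ 2) / 2)) / 2) •
          ((PS - PA) * ρ * (PS - PA)) := by
  set q : ℝ := Real.exp (-(Real.pi ^ 2 * σ ^ 2) / 2) with hq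
  have hexpand : ∀ β : ℝ,
      (PS + Complex.exp (Complex.I * Real.pi * β) • PA) * ρ *
          (PS + Complex.exp (Complex.I * Real.pi * β) • PA)ᴴ
      = (PS * ρ * PS + PA * ρ * PA)
        + Complex.exp ((1 * Real.pi : ℝ) * β * Complex.I) • (PA * ρ * PS)
        + Complex.exp ((-1 * Real.pi : ℝ) * β * Complex.I) • (PS * ρ * PA) := by
    intro β
    have e1 : Complex.exp (Complex.I * Real.pi * β)
        = Complex.exp ((1 * Real.pi : ℝ) * β * Complex.I) := by
      congr 1; push_cast; ring
    have e2 : star (Complex.exp ((1 * Real.pi : ℝ) * β * Complex.I))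
        = Complex.exp ((-1 * Real.pi : ℝ) * β * Complex.I) := by
      rw [Complex.star_def, ← Complex.exp_conj]
      congr 1
      simp
    have e3 : Complex.exp ((1 * Real.pi : ℝ) * β * Complex.I)
        * Complex.exp ((-1 * Real.pi : ℝ) * β * Complex.I) = 1 := by
      rw [← Complex.exp_add, ← Complex.exp_zero]
      congr 1
      push_cast
      ring
    rw [e1, conjTranspose_add, conjTranspose_smul, hPSherm.eq, hPAherm.eq, e2]
    simp only [add_mul, mul_add, smul_mul_assoc, mul_smul_comm, smul_add, smul_smul]
    rw [mul_comm (Complex.exp ((-1 * Real.pi : ℝ) * β * Complex.I)), e3, one_smul]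
    abel
  simp_rw [hexpand]
  refine (integral_add_phases_gaussianReal σ v hv (PS * ρ * PS + PA * ρ * PA)
    (PA * ρ * PS) (PS * ρ * PA)).trans ?_
  rw [← hq]
  have hρ : ρ = PS * ρ * PS + PS * ρ * PA + PA * ρ * PS + PA * ρ * PA := by
    calc ρ = (PS + PA) * ρ * (PS + PA) := by rw [hsum, one_mul, mul_one]
      _ = _ := by noncomm_ring
  have hS : (PS - PA) * ρ * (PS - PA)
      = PS * ρ * PS - PS * ρ * PA - PA * ρ * PS + PA * ρ * PA := by noncomm_ring
  rw [hS]
  conv_rhs => enter [1, 2]; rw [hρ]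
  rw [neg_smul, neg_smul, Complex.coe_smul, Complex.coe_smul]
  module

/-- Averaging a faulty SWAP gate `S^β = P_S + e^{iπβ} P_A` over a Gaussian pulse exponent
`β` with mean `1` and variance `σ²` yields the probabilistic mixture
`p • ρ + (1 - p) • (S ρ S)` with `p = (1 - e^{-π²σ²/2})/2`. -/
theorem faulty_swap_gaussian_average (d : ℕ) (hd : 0 < d)
    (PS PA : Matrix (Fin d) (Fin d) ℂ)
    (hPSherm : PS.IsHermitian) (hPAherm : PA.IsHermitian)
    (hPSidem : PS * PS = PS) (hPAidem : PA * PA = PA)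
    (hsum : PS + PA = 1) (horth : PS * PA = 0)
    (σ : ℝ) (hσ : 0 < σ) (ρ : Matrix (Fin d) (Fin d) ℂ) :
    (∫ β : ℝ,
        (PS + Complex.exp (Complex.I * Real.pi * β) • PA) * ρ *
          (PS + Complex.exp (Complex.I * Real.pi * β) • PA)ᴴ
      ∂(gaussianReal 1 ⟨σ ^ 2, sq_nonneg σ⟩))
    = ((1 - Real.exp (-(Real.pi ^ 2 * σ ^ 2) / 2)) / 2) • ρ +
        (1 - (1 - Real.exp (-(Real.pi ^ 2 * σ ^ 2) / 2)) / 2) •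
          ((PS - PA) * ρ * (PS - PA)) := by
  exact faulty_swap_average_of_variance PS PA hPSherm hPAherm hsum σ _ rfl ρ
end

section
/- Let d ≥ 2 and let μ be the Haar probability measure on the unitary group U(d) of d × d complex matrices. Then for all indices i, j, k, l, i', j', k', l' : Fin d, ∫ U(i,i') · conj(U(j,j')) · U(k,k') · conj(U(l,l')) dμ(U) = (δ_{ij} δ_{kl} δ_{i'j'} δ_{k'l'} + δ_{il} δ_{kj} δ_{i'l'} δ_{k'j'})/(d² - 1) − (δ_{ij} δ_{kl} δ_{i'l'} δ_{k'j'} + δ_{il} δ_{kj} δ_{i'j'} δ_{k'l'})/(d(d² - 1)), where δ_{ab} equals 1 if a = b and 0 otherwise. -/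
/-!
Only left invariance of `μ` is used. With the column indices `i' j' k' l'` fixed, the moment is a
tensor `T i j k l` in the row indices, and left invariance says that `T` is fixed by
`V ⊗ conj V ⊗ V ⊗ conj V` for every unitary `V` (`moment_invariant`). Such a tensor has the form
`A δ_{ij} δ_{kl} + B δ_{il} δ_{kj}` (`exists_coeff`): diagonal `V` force `T` to vanish unless
`{i, k} = {j, l}` as multisets (`moment_eq_zero`), permutation matrices make `T i i k k` and
`T i k k i` independent of `i ≠ k` (`moment_perm`), and a reflection mixing two coordinates gives
`T p p p p = T p p q q + T p q q p` (`moment_diag`).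

Orthonormality of the columns of `U` evaluates the two full contractions of `T`
(`contract_first`, `contract_second`), which yields
`A d² + B d = δ_{i'j'} δ_{k'l'}` and `A d + B d² = δ_{i'l'} δ_{k'j'}`. Since `d ≥ 2` this system
is invertible, and its solution is the Weingarten expression.
-/

open MeasureTheory Matrix

noncomputable instance (d : ℕ) : MeasurableSpace (Matrix.unitaryGroup (Fin d) ℂ) := borel _

instance (d : ℕ) : BorelSpace (Matrix.unitaryGroup (Fin d) ℂ) := ⟨rfl⟩

namespace Weingarten

variable {d : ℕ}

/-! ### The moment tensor and its invariance -/

/-- The mixed second moment as a function of the column indices `i' j' k' l'` (first) and of the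
row indices `i j k l` (last). -/
noncomputable def moment (μ : Measure (Matrix.unitaryGroup (Fin d) ℂ))
    (i' j' k' l' i j k l : Fin d) : ℂ :=
  ∫ U : Matrix.unitaryGroup (Fin d) ℂ,
        (U : Matrix (Fin d) (Fin d) ℂ) i i' *
          (starRingEnd ℂ) ((U : Matrix (Fin d) (Fin d) ℂ) j j') *
          (U : Matrix (Fin d) (Fin d) ℂ) k k' *
          (starRingEnd ℂ) ((U : Matrix (Fin d) (Fin d) ℂ) l l') ∂μ

lemma integrable_moment (μ : Measure (Matrix.unitaryGroup (Fin d) ℂ)) [IsProbabilityMeasure μ]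
    (i' j' k' l' i j k l : Fin d) :
    Integrable (fun U : Matrix.unitaryGroup (Fin d) ℂ =>
        (U : Matrix (Fin d) (Fin d) ℂ) i i' *
          (starRingEnd ℂ) ((U : Matrix (Fin d) (Fin d) ℂ) j j') *
          (U : Matrix (Fin d) (Fin d) ℂ) k k' *
          (starRingEnd ℂ) ((U : Matrix (Fin d) (Fin d) ℂ) l l')) μ := by
  have hc : ∀ a b : Fin d, Continuous fun U : Matrix.unitaryGroup (Fin d) ℂ =>
      (U : Matrix (Fin d) (Fin d) ℂ) a b := fun a b =>
    continuous_subtype_val.matrix_elem a b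
  have hs : ∀ a b : Fin d, Continuous fun U : Matrix.unitaryGroup (Fin d) ℂ =>
      (starRingEnd ℂ) ((U : Matrix (Fin d) (Fin d) ℂ) a b) := fun a b =>
    Complex.continuous_conj.comp (hc a b)
  refine Integrable.of_bound
    ((((hc i i').mul (hs j j')).mul (hc k k')).mul (hs l l')).aestronglyMeasurable 1 ?_
  refine Filter.Eventually.of_forall fun U => ?_
  have hb : ∀ a b : Fin d, ‖(U : Matrix (Fin d) (Fin d) ℂ) a b‖ ≤ 1 := fun a b =>
    entry_norm_bound_of_unitary U.2 a b
  simp only [norm_mul, RCLike.norm_conj]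
  have h1 := mul_le_one₀ (hb i i') (norm_nonneg _) (hb j j')
  have h2 := mul_le_one₀ h1 (norm_nonneg _) (hb k k')
  exact mul_le_one₀ h2 (norm_nonneg _) (hb l l')

lemma integral_sum_const_mul {α : Type*} [MeasurableSpace α] {μ : Measure α}
    (v : Fin d → ℂ) (f : Fin d → α → ℂ) (hf : ∀ a, Integrable (f a) μ) :
    ∫ x, ∑ a, v a * f a x ∂μ = ∑ a, v a * ∫ x, f a x ∂μ := by
  rw [integral_finsetSum _ fun a _ => (hf a).const_mul (v a)]
  simp only [integral_const_mul]

lemma mul_sums_eq (v₁ u₁ v₂ u₂ v₃ u₃ v₄ u₄ : Fin d → ℂ) :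
    (∑ a, v₁ a * u₁ a) * (∑ b, v₂ b * u₂ b) * (∑ c, v₃ c * u₃ c) * (∑ e, v₄ e * u₄ e) =
      ∑ a, v₁ a * ∑ b, v₂ b * ∑ c, v₃ c * ∑ e, v₄ e * (u₁ a * u₂ b * u₃ c * u₄ e) := by
  have h (v u : Fin d → ℂ) (x y : ℂ) :
      ∑ e, v e * (x * u e * y) = x * (∑ e, v e * u e) * y := by
    rw [Finset.mul_sum, Finset.sum_mul]
    exact Finset.sum_congr rfl fun e _ => by ring
  have h₄ (a b c : Fin d) := h v₄ u₄ (u₁ a * u₂ b * u₃ c) 1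
  have h₃ (a b : Fin d) := h v₃ u₃ (u₁ a * u₂ b) (∑ e, v₄ e * u₄ e)
  have h₂ (a : Fin d) := h v₂ u₂ (u₁ a) ((∑ c, v₃ c * u₃ c) * ∑ e, v₄ e * u₄ e)
  have h₁ := h v₁ u₁ 1 ((∑ b, v₂ b * u₂ b) * ((∑ c, v₃ c * u₃ c) * ∑ e, v₄ e * u₄ e))
  simp only [mul_one, one_mul, mul_assoc] at h₁ h₂ h₃ h₄ ⊢
  simp only [h₄, h₃, h₂, h₁]

/-- Left invariance of the Haar measure under `V`, read on the moment tensor. -/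
lemma moment_invariant (μ : Measure (Matrix.unitaryGroup (Fin d) ℂ))
    [μ.IsHaarMeasure] [IsProbabilityMeasure μ] (V : Matrix.unitaryGroup (Fin d) ℂ)
    (i' j' k' l' i j k l : Fin d) :
    moment μ i' j' k' l' i j k l =
      ∑ a, (V : Matrix (Fin d) (Fin d) ℂ) i a *
        ∑ b, (starRingEnd ℂ) ((V : Matrix (Fin d) (Fin d) ℂ) j b) *
          ∑ c, (V : Matrix (Fin d) (Fin d) ℂ) k c *
            ∑ e, (starRingEnd ℂ) ((V : Matrix (Fin d) (Fin d) ℂ) l e) *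
              moment μ i' j' k' l' a b c e := by
  have hI := integrable_moment μ i' j' k' l'
  have hsum : ∀ (v : Fin d → ℂ) (f : Fin d → Matrix.unitaryGroup (Fin d) ℂ → ℂ),
      (∀ a, Integrable (f a) μ) → Integrable (fun x => ∑ a, v a * f a x) μ := fun v f hf =>
    integrable_finsetSum _ fun a _ => (hf a).const_mul (v a)
  unfold moment
  rw [← integral_mul_left_eq_self _ V]
  simp only [← integral_sum_const_mul _ _ fun e => hI _ _ _ e]
  simp only [← integral_sum_const_mul _ _ fun c => hsum _ _ fun e => hI _ _ c e]
  simp only [← integral_sum_const_mul _ _ fun b => hsum _ _ fun c => hsum _ _ fun e => hI _ b c e]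
  rw [← integral_sum_const_mul _ _ fun a => hsum _ _ fun b => hsum _ _ fun c => hsum _ _
    fun e => hI a b c e]
  congr 1
  funext U
  simp only [Submonoid.coe_mul, Matrix.mul_apply, map_sum, map_mul]
  exact mul_sums_eq _ _ _ _ _ _ _ _

/-! ### Diagonal unitaries: vanishing entries -/

/-- The diagonal unitary with entry `I` at position `a` and `1` elsewhere. -/
noncomputable def phase (a : Fin d) : Matrix.unitaryGroup (Fin d) ℂ :=
  ⟨Matrix.diagonal fun b => if b = a then Complex.I else 1, by
    rw [Matrix.mem_unitaryGroup_iff, Matrix.star_eq_conjTranspose,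
      Matrix.diagonal_conjTranspose, Matrix.diagonal_mul_diagonal, ← Matrix.diagonal_one]
    congr 1
    funext b
    by_cases h : b = a <;> simp [h]⟩

lemma moment_phase (μ : Measure (Matrix.unitaryGroup (Fin d) ℂ))
    [μ.IsHaarMeasure] [IsProbabilityMeasure μ] (i' j' k' l' i j k l a : Fin d) :
    moment μ i' j' k' l' i j k l =
      (if i = a then Complex.I else 1) * ((if j = a then -Complex.I else 1) *
        ((if k = a then Complex.I else 1) * ((if l = a then -Complex.I else 1) *
          moment μ i' j' k' l' i j k l))) := by
  have h := moment_invariant μ (phase a) i' j' k' l' i j k l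
  simpa [phase, Matrix.diagonal_apply, apply_ite (starRingEnd ℂ)] using h

/-- The moment vanishes unless `{i, k} = {j, l}` as multisets. -/
lemma moment_eq_zero (μ : Measure (Matrix.unitaryGroup (Fin d) ℂ))
    [μ.IsHaarMeasure] [IsProbabilityMeasure μ] (i' j' k' l' i j k l : Fin d)
    (h1 : ¬(i = j ∧ k = l)) (h2 : ¬(i = l ∧ k = j)) :
    moment μ i' j' k' l' i j k l = 0 := by
  have key : ∀ (z T : ℂ), z ≠ 1 → T = z * T → T = 0 := fun z T hz hT => by
    have : (z - 1) * T = 0 := by linear_combination -hT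
    exact (mul_eq_zero.mp this).resolve_left (sub_ne_zero.mpr hz)
  have hI : Complex.I ≠ 1 := fun h => by simpa using congrArg Complex.re h
  have hI2 : (-1 : ℂ) ≠ 1 := by norm_num
  -- A phase at `i` detects the case `i ∉ {j, l}`. Otherwise `i` cancels against `j` or `l`, and a
  -- phase at `k` contributes a single factor `I`.
  have hi := moment_phase μ i' j' k' l' i j k l i
  have hk := moment_phase μ i' j' k' l' i j k l k
  have hII := Complex.I_mul_I
  by_cases hij : i = j
  · have hkl : ¬ l = k := fun h => h1 ⟨hij, h.symm⟩
    refine key Complex.I _ hI ?_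
    subst hij
    by_cases hik : i = k
    · simp only [hik, if_true, hkl, if_false] at hk ⊢
      linear_combination hk - Complex.I * moment μ i' j' k' l' k k k l * hII
    · simpa [hik, hkl] using hk
  · by_cases hil : i = l
    · have hkj : ¬ j = k := fun h => h2 ⟨hil, h.symm⟩
      refine key Complex.I _ hI ?_
      subst hil
      by_cases hik : i = k
      · simp only [hik, if_true, hkj, if_false] at hk ⊢
        linear_combination hk - Complex.I * moment μ i' j' k' l' k j k k * hII
      · simpa [hik, hkj] using hk
    · have hji : ¬ j = i := fun h => hij h.symm
      have hli : ¬ l = i := fun h => hil h.symm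
      by_cases hki : k = i
      · refine key (-1) _ hI2 ?_
        simp only [hki, if_true, hji, hli, if_false] at hi ⊢
        linear_combination hi + moment μ i' j' k' l' i j i l * hII
      · refine key Complex.I _ hI ?_
        simpa [hki, hji, hli] using hi

/-! ### Permutations and reflections: relations between entries -/

/-- The permutation matrix of `σ` as a unitary. -/
noncomputable def permUnitary (σ : Equiv.Perm (Fin d)) : Matrix.unitaryGroup (Fin d) ℂ :=
  ⟨σ.permMatrix ℂ, by
    rw [Matrix.mem_unitaryGroup_iff, Matrix.star_eq_conjTranspose,
      Matrix.conjTranspose_permMatrix, ← Matrix.permMatrix_mul, inv_mul_cancel,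
      Matrix.permMatrix_one]⟩

lemma moment_perm (μ : Measure (Matrix.unitaryGroup (Fin d) ℂ))
    [μ.IsHaarMeasure] [IsProbabilityMeasure μ] (σ : Equiv.Perm (Fin d))
    (i' j' k' l' i j k l : Fin d) :
    moment μ i' j' k' l' i j k l = moment μ i' j' k' l' (σ i) (σ j) (σ k) (σ l) := by
  have h := moment_invariant μ (permUnitary σ) i' j' k' l' i j k l
  simpa [permUnitary, Equiv.Perm.permMatrix, PEquiv.toMatrix_apply,
    apply_ite (starRingEnd ℂ)] using h

lemma exists_perm {p q i k : Fin d} (hpq : p ≠ q) (hik : i ≠ k) :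
    ∃ σ : Equiv.Perm (Fin d), σ p = i ∧ σ q = k := by
  have h : i ≠ Equiv.swap p i q := fun h => hpq <| by
    have := congrArg (Equiv.swap p i) h
    simpa using this
  refine ⟨Equiv.swap (Equiv.swap p i q) k * Equiv.swap p i, ?_, ?_⟩
  · simp [Equiv.swap_apply_of_ne_of_ne h hik]
  · simp

/-- The vector `(3/5) e_p + (4/5) e_q`, a unit vector when `p ≠ q`. -/
noncomputable def reflVec (p q : Fin d) : Fin d → ℂ :=
  Pi.single p (3 / 5) + Pi.single q (4 / 5)

/-- The reflection `1 - 2 v vᵀ` along the unit vector `reflVec p q`. -/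
noncomputable def reflUnitary {p q : Fin d} (hpq : p ≠ q) : Matrix.unitaryGroup (Fin d) ℂ :=
  ⟨1 - (2 : ℂ) • Matrix.vecMulVec (reflVec p q) (reflVec p q), by
    have hs : star (reflVec p q) = reflVec p q := by
      funext a
      simp [reflVec, Pi.single_apply, apply_ite (starRingEnd ℂ), map_ofNat]
    have hv : reflVec p q ⬝ᵥ reflVec p q = 1 := by
      simp [reflVec, dotProduct_add, hpq, hpq.symm]
      norm_num
    rw [Matrix.mem_unitaryGroup_iff, Matrix.star_eq_conjTranspose]
    simp only [Matrix.conjTranspose_sub, Matrix.conjTranspose_one, Matrix.conjTranspose_smul,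
      Matrix.conjTranspose_vecMulVec, hs]
    have hsq : Matrix.vecMulVec (reflVec p q) (reflVec p q) *
        Matrix.vecMulVec (reflVec p q) (reflVec p q) =
        Matrix.vecMulVec (reflVec p q) (reflVec p q) := by
      rw [Matrix.vecMulVec_mul_vecMulVec, hv]
      simp
    simp only [star_ofNat, sub_mul, mul_sub, one_mul, mul_one, smul_mul_assoc, mul_smul_comm, hsq]
    module⟩

/-- Invariance under a reflection of the `p, q` plane ties the fully diagonal entries of the
moment tensor to the other nonzero ones. -/
lemma moment_diag (μ : Measure (Matrix.unitaryGroup (Fin d) ℂ))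
    [μ.IsHaarMeasure] [IsProbabilityMeasure μ] {p q : Fin d} (hpq : p ≠ q)
    (i' j' k' l' : Fin d) :
    moment μ i' j' k' l' p p p p =
      moment μ i' j' k' l' p p q q + moment μ i' j' k' l' p q q p := by
  have hrow : ∀ a, (reflUnitary hpq : Matrix (Fin d) (Fin d) ℂ) p a =
      (if a = p then 7 / 25 else 0) + (if a = q then -24 / 25 else 0) := by
    intro a
    by_cases hp : a = p
    · subst hp
      simp [reflUnitary, reflVec, Matrix.vecMulVec_apply, hpq]
      norm_num
    · by_cases hq : a = q
      · subst hq
        simp [reflUnitary, reflVec, Matrix.vecMulVec_apply, hpq, hpq.symm]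
        norm_num
      · simp [reflUnitary, reflVec, Matrix.vecMulVec_apply, hpq, hp, hq, Ne.symm hp]
  have hconj : ∀ a, (starRingEnd ℂ) ((reflUnitary hpq : Matrix (Fin d) (Fin d) ℂ) p a) =
      (if a = p then 7 / 25 else 0) + (if a = q then -24 / 25 else 0) := by
    intro a
    rw [hrow]
    simp [apply_ite (starRingEnd ℂ), map_ofNat]
  have hsum : ∀ f : Fin d → ℂ,
      ∑ a, ((if a = p then (7 / 25 : ℂ) else 0) + (if a = q then -24 / 25 else 0)) * f a =
        7 / 25 * f p + -24 / 25 * f q := by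
    intro f
    simp [add_mul, Finset.sum_add_distrib]
  have h := moment_invariant μ (reflUnitary hpq) i' j' k' l' p p p p
  simp only [hconj] at h
  simp only [hrow, hsum] at h
  have hz := moment_eq_zero μ i' j' k' l'
  have hqp := hpq.symm
  rw [hz p p p q (by simp [hpq]) (by simp [hpq]), hz p p q p (by simp [hqp]) (by simp [hqp]),
    hz p q p p (by simp [hpq]) (by simp [hpq]), hz q p p p (by simp [hqp]) (by simp [hqp]),
    hz p q p q (by simp [hpq]) (by simp [hpq]), hz q p q p (by simp [hqp]) (by simp [hqp]),
    hz p q q q (by simp [hpq]) (by simp [hpq]), hz q p q q (by simp [hqp]) (by simp [hqp]),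
    hz q q p q (by simp [hpq]) (by simp [hpq]), hz q q q p (by simp [hqp]) (by simp [hqp])] at h
  have hs := moment_perm μ (Equiv.swap p q) i' j' k' l'
  have e1 := hs q q q q
  have e2 := hs q q p p
  have e3 := hs q p p q
  simp only [Equiv.swap_apply_left, Equiv.swap_apply_right] at e1 e2 e3
  rw [e1, e2, e3] at h
  -- `1 - (7/25)⁴ - (24/25)⁴ = 2 (7/25)² (24/25)² = 56448 / 390625`
  linear_combination (390625 / 56448 : ℂ) * h

/-- The moment tensor is a combination of the two pairings of its row indices. -/
lemma exists_coeff (hd : 2 ≤ d) (μ : Measure (Matrix.unitaryGroup (Fin d) ℂ))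
    [μ.IsHaarMeasure] [IsProbabilityMeasure μ] (i' j' k' l' : Fin d) :
    ∃ A B : ℂ, ∀ i j k l, moment μ i' j' k' l' i j k l =
      A * ((if i = j then 1 else 0) * (if k = l then 1 else 0)) +
        B * ((if i = l then 1 else 0) * (if k = j then 1 else 0)) := by
  have : Nontrivial (Fin d) := Fin.nontrivial_iff_two_le.mpr hd
  obtain ⟨p, q, hpq⟩ := exists_pair_ne (Fin d)
  have hA : ∀ i k, i ≠ k →
      moment μ i' j' k' l' i i k k = moment μ i' j' k' l' p p q q := fun i k hik => by
    obtain ⟨σ, rfl, rfl⟩ := exists_perm hpq hik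
    exact (moment_perm μ σ i' j' k' l' p p q q).symm
  have hB : ∀ i k, i ≠ k →
      moment μ i' j' k' l' i k k i = moment μ i' j' k' l' p q q p := fun i k hik => by
    obtain ⟨σ, rfl, rfl⟩ := exists_perm hpq hik
    exact (moment_perm μ σ i' j' k' l' p q q p).symm
  refine ⟨moment μ i' j' k' l' p p q q, moment μ i' j' k' l' p q q p, fun i j k l => ?_⟩
  by_cases h1 : i = j ∧ k = l
  · obtain ⟨rfl, rfl⟩ := h1
    by_cases hik : i = k
    · subst hik
      obtain ⟨m, hm⟩ := exists_ne i
      rw [moment_diag μ hm.symm, hA i m hm.symm, hB i m hm.symm]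
      simp
    · rw [hA i k hik]
      simp [hik]
  · by_cases h2 : i = l ∧ k = j
    · obtain ⟨rfl, rfl⟩ := h2
      have hik : i ≠ k := fun h => h1 ⟨h, h.symm⟩
      rw [hB i k hik]
      simp [hik]
    · rw [moment_eq_zero μ i' j' k' l' i j k l h1 h2]
      split_ifs <;> simp_all

/-! ### Contractions -/

/-- Orthonormality of the columns of a unitary matrix. -/
lemma sum_col (U : Matrix.unitaryGroup (Fin d) ℂ) (a b : Fin d) :
    ∑ i, (U : Matrix (Fin d) (Fin d) ℂ) i a *
      (starRingEnd ℂ) ((U : Matrix (Fin d) (Fin d) ℂ) i b) = if a = b then 1 else 0 := by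
  have h := congrFun (congrFun (Matrix.mem_unitaryGroup_iff'.mp U.2) b) a
  rw [Matrix.mul_apply, Matrix.one_apply] at h
  rw [show (if a = b then (1 : ℂ) else 0) = if b = a then 1 else 0 by simp only [eq_comm], ← h]
  refine Finset.sum_congr rfl fun i _ => ?_
  rw [mul_comm, Matrix.star_apply]
  rfl

lemma contract_first (μ : Measure (Matrix.unitaryGroup (Fin d) ℂ)) [IsProbabilityMeasure μ]
    (i' j' k' l' : Fin d) :
    ∑ i, ∑ k, moment μ i' j' k' l' i i k k =
      (if i' = j' then 1 else 0) * (if k' = l' then 1 else 0) := by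
  have hI := integrable_moment μ i' j' k' l'
  unfold moment
  simp_rw [← integral_finsetSum _ fun k _ => hI _ _ k k]
  rw [← integral_finsetSum _ fun i _ => integrable_finsetSum _ fun k _ => hI i i k k]
  simp only [mul_assoc, ← Finset.mul_sum, sum_col]
  simp only [← mul_assoc, ← Finset.sum_mul, sum_col]
  simp

lemma contract_second (μ : Measure (Matrix.unitaryGroup (Fin d) ℂ)) [IsProbabilityMeasure μ]
    (i' j' k' l' : Fin d) :
    ∑ i, ∑ k, moment μ i' j' k' l' i k k i =
      (if i' = l' then 1 else 0) * (if k' = j' then 1 else 0) := by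
  rw [← contract_first μ i' l' k' j']
  refine Finset.sum_congr rfl fun i _ => Finset.sum_congr rfl fun k _ => ?_
  unfold moment
  congr 1
  funext U
  ring

end Weingarten

/-- Entrywise second-moment Weingarten formula: for Haar-random `U` in the unitary
group `U(d)`, `∫ U_{ii'} conj(U_{jj'}) U_{kk'} conj(U_{ll'}) dμ` is given by the
second-order Weingarten expression. -/
theorem weingarten_second_moment (d : ℕ) (hd : 2 ≤ d)
    (μ : Measure (Matrix.unitaryGroup (Fin d) ℂ))
    [μ.IsHaarMeasure] [IsProbabilityMeasure μ]
    (i j k l i' j' k' l' : Fin d) :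
    (∫ U : Matrix.unitaryGroup (Fin d) ℂ,
        (U : Matrix (Fin d) (Fin d) ℂ) i i' *
          (starRingEnd ℂ) ((U : Matrix (Fin d) (Fin d) ℂ) j j') *
          (U : Matrix (Fin d) (Fin d) ℂ) k k' *
          (starRingEnd ℂ) ((U : Matrix (Fin d) (Fin d) ℂ) l l') ∂μ)
    = ((if i = j then (1:ℂ) else 0) * (if k = l then (1:ℂ) else 0) *
          (if i' = j' then (1:ℂ) else 0) * (if k' = l' then (1:ℂ) else 0) +
        (if i = l then (1:ℂ) else 0) * (if k = j then (1:ℂ) else 0) *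
          (if i' = l' then (1:ℂ) else 0) * (if k' = j' then (1:ℂ) else 0)) /
        ((d : ℂ) ^ 2 - 1)
      - ((if i = j then (1:ℂ) else 0) * (if k = l then (1:ℂ) else 0) *
            (if i' = l' then (1:ℂ) else 0) * (if k' = j' then (1:ℂ) else 0) +
          (if i = l then (1:ℂ) else 0) * (if k = j then (1:ℂ) else 0) *
            (if i' = j' then (1:ℂ) else 0) * (if k' = l' then (1:ℂ) else 0)) /
        ((d : ℂ) * ((d : ℂ) ^ 2 - 1)) := by
  obtain ⟨A, B, hAB⟩ := Weingarten.exists_coeff hd μ i' j' k' l'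
  have h1 := Weingarten.contract_first μ i' j' k' l'
  have h2 := Weingarten.contract_second μ i' j' k' l'
  simp only [hAB] at h1 h2
  have e1 : A * (d : ℂ) ^ 2 + B * d =
      (if i' = j' then 1 else 0) * (if k' = l' then 1 else 0) := by
    rw [← h1]
    simp [Finset.sum_add_distrib, eq_comm]
    ring
  have e2 : A * (d : ℂ) + B * (d : ℂ) ^ 2 =
      (if i' = l' then 1 else 0) * (if k' = j' then 1 else 0) := by
    rw [← h2]
    simp [Finset.sum_add_distrib, eq_comm]
    ring
  have hd0 : (d : ℂ) ≠ 0 := by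
    exact_mod_cast (by omega : d ≠ 0)
  have hd1 : (d : ℂ) ^ 2 - 1 ≠ 0 := by
    have hne : d ^ 2 ≠ 1 := by nlinarith
    exact sub_ne_zero.mpr (by exact_mod_cast hne)
  have hA : A = ((if i' = j' then 1 else 0) * (if k' = l' then 1 else 0)) / ((d : ℂ) ^ 2 - 1) -
      ((if i' = l' then 1 else 0) * (if k' = j' then 1 else 0)) /
        ((d : ℂ) * ((d : ℂ) ^ 2 - 1)) := by
    rw [← e1, ← e2]
    field_simp
    ring
  have hB : B = ((if i' = l' then 1 else 0) * (if k' = j' then 1 else 0)) / ((d : ℂ) ^ 2 - 1) -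
      ((if i' = j' then 1 else 0) * (if k' = l' then 1 else 0)) /
        ((d : ℂ) * ((d : ℂ) ^ 2 - 1)) := by
    rw [← e1, ← e2]
    field_simp
    ring
  have h := hAB i j k l
  unfold Weingarten.moment at h
  rw [h, hA, hB]
  ring
end

section
/- Let k ≤ k' be natural numbers and let H_n denote the probabilists' Hermite polynomial of degree n. Then for every α : ℝ, ∫ ℝ exp(-x²/2) · H_k(x) · H_{k'}(x) · exp(i α x) dx = √(2π) · exp(-α²/2) · Σ_{l=0}^{k} (k! · k'! · (i α)^{k'-k+2l}) / (l! · (k-l)! · (k'-k+l)!), as an equality of complex numbers. -/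
open scoped Nat

/-!
Write `L p = ∫ p(x) e^{-x²/2} e^{iαx} dx` for a polynomial `p`. Since the integral of the derivative
of `p(x) e^{-x²/2 + iαx}` vanishes, `L (X p - p') = iα L p` (`gaussInt_raise`). Take `p = H_m H_n`:
as `H_{n+1} = X H_n - H_n'` and `H_m' = m H_{m-1}`, the numbers `J(m,n) = L (H_m H_n)` satisfy
`J(m,n+1) = iα J(m,n) + m J(m-1,n)`. By Pascal's rule the sums
`S(m,n) = Σ_j C(m,j) C(n,j) j! (iα)^{m+n-2j}` satisfy the same recurrence, so
`J(m,n) = S(m,n) L 1` by induction on `n`. The value `L 1 = √(2π) e^{-α²/2}` is the Gaussian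
Fourier transform, and `j = k - l` turns `S(k,k')` into the sum of the theorem.
-/

open Polynomial MeasureTheory

/-- The integrand `p(x) e^{-x²/2} e^{iαx}`, for an integer polynomial `p`. -/
noncomputable def gaussFun (α : ℝ) (p : ℤ[X]) (x : ℝ) : ℂ :=
  ((aeval x p : ℝ) : ℂ) * ((Real.exp (-x ^ 2 / 2) : ℂ) * Complex.exp (Complex.I * α * x))

/-- The functional `L p = ∫ p(x) e^{-x²/2} e^{iαx} dx` on integer polynomials. -/
noncomputable def gaussInt (α : ℝ) (p : ℤ[X]) : ℂ := ∫ x : ℝ, gaussFun α p x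

lemma gaussFun_add (α : ℝ) (p q : ℤ[X]) :
    gaussFun α (p + q) = gaussFun α p + gaussFun α q := by
  funext x; simp only [gaussFun, map_add, Pi.add_apply]; push_cast; ring

lemma integrable_gaussFun (α : ℝ) (p : ℤ[X]) : Integrable (gaussFun α p) := by
  induction p using Polynomial.induction_on' with
  | add p q hp hq => rw [gaussFun_add]; exact hp.add hq
  | monomial n c =>
    have h : Integrable fun x : ℝ => (c : ℝ) * (x ^ (n : ℝ) * Real.exp (-(1 / 2) * x ^ 2)) :=
      (integrable_rpow_mul_exp_neg_mul_sq (by norm_num)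
        (by have : (0 : ℝ) ≤ n := n.cast_nonneg
            linarith)).const_mul _
    refine h.mono ?_ (Filter.Eventually.of_forall fun x => ?_)
    · apply Continuous.aestronglyMeasurable
      unfold gaussFun
      simp only [aeval_monomial]
      fun_prop
    · have h1 : ‖Complex.exp (Complex.I * α * x)‖ = 1 := by
        rw [Complex.norm_exp]; simp
      have h2 : -(1 / 2) * x ^ 2 = -x ^ 2 / 2 := by ring
      simp only [gaussFun, norm_mul, h1, Complex.norm_real, aeval_monomial, Real.rpow_natCast, h2,
        mul_one]
      simp [mul_assoc]

lemma gaussInt_add (α : ℝ) (p q : ℤ[X]) :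
    gaussInt α (p + q) = gaussInt α p + gaussInt α q := by
  unfold gaussInt
  rw [gaussFun_add]
  exact integral_add (integrable_gaussFun α p) (integrable_gaussFun α q)

lemma gaussInt_natCast_mul (α : ℝ) (m : ℕ) (p : ℤ[X]) :
    gaussInt α (m * p) = m * gaussInt α p := by
  unfold gaussInt
  rw [← integral_const_mul]
  congr 1; funext x
  simp [gaussFun, mul_assoc]

/-- Integration by parts: `L (X p - p') = iα L p`. -/
lemma gaussInt_raise (α : ℝ) (p : ℤ[X]) :
    gaussInt α (X * p - derivative p) = Complex.I * α * gaussInt α p := by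
  have hd : ∀ x : ℝ, HasDerivAt (gaussFun α p)
      (Complex.I * α * gaussFun α p x - gaussFun α (X * p - derivative p) x) x := by
    intro x
    have h1 : HasDerivAt (fun x : ℝ => ((aeval x p : ℝ) : ℂ))
        ((aeval x (derivative p) : ℝ) : ℂ) x := (p.hasDerivAt_aeval x).ofReal_comp
    have h2 : HasDerivAt (fun x : ℝ => ((Real.exp (-x ^ 2 / 2) : ℝ) : ℂ))
        ((Real.exp (-x ^ 2 / 2) * (-x) : ℝ) : ℂ) x := by
      refine HasDerivAt.ofReal_comp ?_
      refine HasDerivAt.exp ?_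
      exact (((hasDerivAt_pow 2 x).neg).div_const 2).congr_deriv (by norm_num; ring)
    have h3 : HasDerivAt (fun x : ℝ => Complex.exp (Complex.I * α * x))
        (Complex.exp (Complex.I * α * x) * (Complex.I * α * 1)) x :=
      (((hasDerivAt_id x).ofReal_comp).const_mul (Complex.I * (α : ℂ))).cexp
    refine (h1.mul (h2.mul h3)).congr_deriv ?_
    simp only [gaussFun, map_sub, map_mul, aeval_X, Pi.mul_apply]
    push_cast
    ring
  have h := integral_eq_zero_of_hasDerivAt_of_integrable hd
    (((integrable_gaussFun α p).const_mul _).sub (integrable_gaussFun α _))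
    (integrable_gaussFun α p)
  rw [integral_sub ((integrable_gaussFun α p).const_mul _) (integrable_gaussFun α _),
    integral_const_mul] at h
  exact (sub_eq_zero.mp h).symm

lemma gaussInt_one (α : ℝ) :
    gaussInt α 1 = (Real.sqrt (2 * Real.pi) : ℂ) * Complex.exp (-(α : ℂ) ^ 2 / 2) := by
  have h := fourierIntegral_gaussian (b := 1 / 2) (by norm_num) (α : ℂ)
  have hs : ((Real.pi : ℂ) / (1 / 2)) ^ (1 / 2 : ℂ) = (Real.sqrt (2 * Real.pi) : ℂ) := by
    rw [Real.sqrt_eq_rpow, Complex.ofReal_cpow (by positivity)]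
    push_cast
    congr 1
    ring
  rw [hs] at h
  convert h using 1
  · unfold gaussInt
    congr 1; funext x
    simp only [gaussFun, map_one, Complex.ofReal_one, one_mul, Complex.ofReal_exp]
    rw [mul_comm]
    congr 2
    push_cast; ring
  · congr 2; ring

lemma derivative_hermite_succ (m : ℕ) :
    derivative (hermite (m + 1)) = ((m + 1 : ℕ) : ℤ[X]) * hermite m := by
  induction m with
  | zero => simp
  | succ m ih =>
    rw [hermite_succ (m + 1), derivative_sub, derivative_mul, ih, derivative_mul,
      hermite_succ m]
    simp
    ring

/-- `J(m,n+1) = iα J(m,n) + L (H_m' H_n)`, where `J(m,n) = L (H_m H_n)`. -/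
lemma gaussInt_hermite_succ (α : ℝ) (m n : ℕ) :
    gaussInt α (hermite m * hermite (n + 1)) =
      Complex.I * α * gaussInt α (hermite m * hermite n) +
        gaussInt α (derivative (hermite m) * hermite n) := by
  rw [← gaussInt_raise, ← gaussInt_add, hermite_succ n, derivative_mul]
  congr 1
  ring

/-- `S(m,n) = Σ_j C(m,j) C(n,j) j! a^{m+n-2j}`. The truncated subtraction is harmless: terms with
`j > n` vanish, and `j ≤ m` in the range of summation. -/
noncomputable def pairSum (a : ℂ) (m n : ℕ) : ℂ :=
  ∑ j ∈ Finset.range (m + 1), (m.choose j : ℂ) * n.choose j * j ! * a ^ (m + n - 2 * j)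

lemma pairSum_zero_left (a : ℂ) (n : ℕ) : pairSum a 0 n = a ^ n := by
  simp [pairSum]

lemma pairSum_zero_right (a : ℂ) (m : ℕ) : pairSum a m 0 = a ^ m := by
  simp [pairSum, Finset.sum_range_succ']

lemma pairSum_succ_succ (a : ℂ) (m n : ℕ) :
    pairSum a (m + 1) (n + 1) = a * pairSum a (m + 1) n + (m + 1 : ℕ) * pairSum a m n := by
  unfold pairSum
  rw [Finset.sum_range_succ', Finset.sum_range_succ' _ (m + 1), mul_add, Finset.mul_sum,
    Finset.mul_sum, add_right_comm (Finset.sum _ _), ← Finset.sum_add_distrib]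
  congr 1
  · refine Finset.sum_congr rfl fun j hj => ?_
    have hj : j ≤ m := Nat.lt_succ_iff.mp (Finset.mem_range.mp hj)
    have e1 : m + 1 + (n + 1) - 2 * (j + 1) = m + n - 2 * j := by omega
    have e2 : ((m + 1 : ℕ) : ℂ) * m.choose j = (m + 1).choose (j + 1) * ((j + 1 : ℕ) : ℂ) := by
      exact_mod_cast Nat.add_one_mul_choose_eq m j
    rw [e1, Nat.choose_succ_succ n j, Nat.factorial_succ]
    have e3 : (n.choose (j + 1) : ℂ) * a ^ (m + n - 2 * j) =
        n.choose (j + 1) * (a * a ^ (m + 1 + n - 2 * (j + 1))) := by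
      rcases Nat.lt_or_ge n (j + 1) with h | h
      · simp [Nat.choose_eq_zero_of_lt h]
      · rw [← pow_succ']
        congr 2
        omega
    push_cast at e2 ⊢
    linear_combination ((m + 1).choose (j + 1) : ℂ) * ((j + 1) * j !) * e3 -
      n.choose j * j ! * a ^ (m + n - 2 * j) * e2
  · simp only [Nat.choose_zero_right, mul_zero, Nat.sub_zero]
    rw [show m + 1 + (n + 1) = m + 1 + n + 1 by ring, pow_succ']
    push_cast; ring

lemma gaussInt_hermite_mul_hermite (α : ℝ) (m n : ℕ) :
    gaussInt α (hermite m * hermite n) = pairSum (Complex.I * α) m n * gaussInt α 1 := by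
  induction n generalizing m with
  | zero =>
    rw [pairSum_zero_right]
    induction m with
    | zero => simp
    | succ m ih =>
      have h := gaussInt_raise α (hermite m)
      rw [← hermite_succ] at h
      simp only [hermite_zero, map_one, mul_one] at ih ⊢
      rw [h, ih]; ring
  | succ n ih =>
    rw [gaussInt_hermite_succ, ih]
    cases m with
    | zero =>
      rw [pairSum_zero_left, pairSum_zero_left]
      simp [gaussInt, gaussFun, pow_succ']
      ring
    | succ m =>
      rw [derivative_hermite_succ, mul_assoc (Nat.cast _), gaussInt_natCast_mul, ih, pairSum_succ_succ]
      ring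

/-- Gaussian–Hermite integral with an oscillatory factor: for `k ≤ k'`,
`∫ e^{-x²/2} H_k(x) H_{k'}(x) e^{iαx} dx
  = √(2π) e^{-α²/2} Σ_{l=0}^{k} k! k'! (iα)^{k'-k+2l} / (l! (k-l)! (k'-k+l)!)`. -/
theorem hermite_oscillatory_integral (k k' : ℕ) (hkk' : k ≤ k') (α : ℝ) :
    (∫ x : ℝ, (Real.exp (-x ^ 2 / 2) : ℂ) *
        ((Polynomial.aeval x (Polynomial.hermite k) : ℝ) : ℂ) *
        ((Polynomial.aeval x (Polynomial.hermite k') : ℝ) : ℂ) *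
        Complex.exp (Complex.I * (α : ℂ) * (x : ℂ)))
    = (Real.sqrt (2 * Real.pi) : ℂ) * Complex.exp (-(α : ℂ) ^ 2 / 2) *
        ∑ l ∈ Finset.range (k + 1),
          (k ! : ℂ) * (k' ! : ℂ) * (Complex.I * (α : ℂ)) ^ (k' - k + 2 * l) /
            ((l ! : ℂ) * ((k - l)! : ℂ) * ((k' - k + l)! : ℂ)) := by
  have h := gaussInt_hermite_mul_hermite α k k'
  rw [gaussInt_one, mul_comm (pairSum _ _ _)] at h
  convert h using 1
  · unfold gaussInt
    congr 1; funext x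
    simp only [gaussFun, map_mul]
    push_cast; ring
  · congr 1
    unfold pairSum
    -- Reversing the order of summation substitutes `j = k - l`.
    rw [← Finset.sum_range_reflect (δ := ℂ)]
    refine Finset.sum_congr rfl fun j hj => ?_
    have hj : j ≤ k := Nat.lt_succ_iff.mp (Finset.mem_range.mp hj)
    have e1 : k + 1 - 1 - j = k - j := by omega
    have e2 : k' - k + 2 * (k - j) = k + k' - 2 * j := by omega
    have e3 : k - (k - j) = j := by omega
    have e4 : k' - k + (k - j) = k' - j := by omega
    rw [e1, e2, e3, e4, Nat.cast_choose ℂ hj, Nat.cast_choose ℂ (hj.trans hkk')]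
    have f1 : (j ! : ℂ) ≠ 0 := by exact_mod_cast j.factorial_ne_zero
    have f2 : ((k - j)! : ℂ) ≠ 0 := by exact_mod_cast (k - j).factorial_ne_zero
    have f3 : ((k' - j)! : ℂ) ≠ 0 := by exact_mod_cast (k' - j).factorial_ne_zero
    field_simp
end

section
/- Let k be a natural number, let H_k denote the probabilists' Hermite polynomial of degree k, and let f : ℝ → ℂ be a Schwartz function. Then ∫ ℝ exp(-x²/2) · H_k(x) · f(x) dx = ∫ ℝ exp(-x²/2) · f^{(k)}(x) dx, where f^{(k)} denotes the k-th iterated derivative of f. -/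
/-!
Since `H_{k+1} = X H_k - H_k'`, the function `e^{-x²/2} H_{k+1}(x)` is minus the derivative of
`e^{-x²/2} H_k(x)`. One integration by parts therefore lowers the Hermite index by one and replaces
`f` by its derivative, which is again Schwartz, so the identity follows by induction on `k`. The
boundary terms vanish because a Gaussian times a polynomial times a Schwartz function is integrable
(`integrable_gaussian_mul_aeval_mul`).
-/

open MeasureTheory

lemma integrable_aeval_mul_schwartz (p : Polynomial ℤ) (f : SchwartzMap ℝ ℂ) :
    Integrable (fun x : ℝ => ((Polynomial.aeval x p : ℝ) : ℂ) * f x) := by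
  induction p using Polynomial.induction_on' with
  | add p q hp hq =>
    refine (hp.add hq).congr (Filter.Eventually.of_forall fun x => ?_)
    simp [add_mul]
  | monomial n a =>
    have h : Integrable (fun x : ℝ => ((x ^ n : ℝ) : ℂ) * f x) := by
      refine (f.integrable_pow_mul volume n).mono' ?_ (Filter.Eventually.of_forall fun x => ?_)
      · have := f.continuous
        exact Continuous.aestronglyMeasurable (by fun_prop)
      · simp
    refine (h.const_mul (a : ℂ)).congr (Filter.Eventually.of_forall fun x => ?_)
    simp [Polynomial.aeval_monomial, mul_assoc]

lemma integrable_gaussian_mul_aeval_mul (p : Polynomial ℤ) (f : SchwartzMap ℝ ℂ) :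
    Integrable (fun x : ℝ => (Real.exp (-x ^ 2 / 2) : ℂ) *
      ((Polynomial.aeval x p : ℝ) : ℂ) * f x) := by
  have h := (integrable_aeval_mul_schwartz p f).bdd_mul (c := 1)
    (f := fun x : ℝ => (Real.exp (-x ^ 2 / 2) : ℂ))
    (Continuous.aestronglyMeasurable (by fun_prop)) (Filter.Eventually.of_forall fun x => by
      rw [Complex.norm_real, Real.norm_of_nonneg (Real.exp_pos _).le]
      exact Real.exp_le_one_iff.2 (by nlinarith [sq_nonneg x]))
  simpa only [mul_assoc] using h

lemma hasDerivAt_gaussian_mul_hermite (k : ℕ) (x : ℝ) :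
    HasDerivAt (fun x : ℝ => (Real.exp (-x ^ 2 / 2) : ℂ) *
        ((Polynomial.aeval x (Polynomial.hermite k) : ℝ) : ℂ))
      (-((Real.exp (-x ^ 2 / 2) : ℂ) *
        ((Polynomial.aeval x (Polynomial.hermite (k + 1)) : ℝ) : ℂ))) x := by
  have h1 : HasDerivAt (fun x : ℝ => -x ^ 2 / 2) (-x) x := by
    have h0 : HasDerivAt (fun x : ℝ => -x ^ 2 / 2) (-((2 : ℕ) * x ^ (2 - 1)) / 2) x :=
      (hasDerivAt_pow 2 x).fun_neg.div_const 2
    exact h0.congr_deriv (by norm_num; ring)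
  have h := (h1.exp.mul ((Polynomial.hermite k).hasDerivAt_aeval x)).ofReal_comp
  convert h using 1
  · ext y
    simp
  · rw [Polynomial.hermite_succ]
    simp only [map_sub, map_mul, Polynomial.aeval_X]
    push_cast
    ring

lemma integral_hermite_succ (k : ℕ) (f : SchwartzMap ℝ ℂ) :
    (∫ x : ℝ, (Real.exp (-x ^ 2 / 2) : ℂ) *
        ((Polynomial.aeval x (Polynomial.hermite (k + 1)) : ℝ) : ℂ) * f x)
    = ∫ x : ℝ, (Real.exp (-x ^ 2 / 2) : ℂ) *
        ((Polynomial.aeval x (Polynomial.hermite k) : ℝ) : ℂ) * deriv f x := by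
  have h := integral_mul_deriv_eq_deriv_mul_of_integrable
    (fun x _ => hasDerivAt_gaussian_mul_hermite k x) (fun x _ => f.hasDerivAt x)
    (integrable_gaussian_mul_aeval_mul _ (SchwartzMap.derivCLM ℂ ℂ f))
    (by
      convert (integrable_gaussian_mul_aeval_mul (Polynomial.hermite (k + 1)) f).neg using 1
      ext x
      simp)
    (integrable_gaussian_mul_aeval_mul _ f)
  rw [h, ← integral_neg]
  simp

/-- Repeated integration by parts for Hermite polynomials against a Schwartz function:
`∫ e^{-x²/2} H_k(x) f(x) dx = ∫ e^{-x²/2} f^{(k)}(x) dx`. -/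
theorem hermite_integration_by_parts (k : ℕ) (f : SchwartzMap ℝ ℂ) :
    (∫ x : ℝ, (Real.exp (-x ^ 2 / 2) : ℂ) *
        ((Polynomial.aeval x (Polynomial.hermite k) : ℝ) : ℂ) * f x)
    = ∫ x : ℝ, (Real.exp (-x ^ 2 / 2) : ℂ) * iteratedDeriv k (⇑f) x := by
  induction k generalizing f with
  | zero => simp
  | succ k ih =>
    rw [integral_hermite_succ, iteratedDeriv_succ']
    exact ih (SchwartzMap.derivCLM ℂ ℂ f)
end

section
/- Let Z = ∫_{ℝ⁴} ∏_{i=1}^{4} exp(-λᵢ²/2) · ∏_{1 ≤ i < j ≤ 4} (λᵢ - λⱼ)² dλ > 0 be the normalization of the GUE(4) joint eigenvalue density. Then for every α : ℝ, (1/Z) ∫_{ℝ⁴} ∏_{i=1}^{4} exp(-λᵢ²/2) · ∏_{1 ≤ i < j ≤ 4} (λᵢ - λⱼ)² · exp(i α (λ₁ - λ₂)) dλ = (1/36) · exp(-α²) · (-α¹⁰ + (25/2) α⁸ - 64 α⁶ + 138 α⁴ - 144 α² + 36), as an equality of complex numbers. -/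
/-!
The product of the differences `λᵢ - λⱼ` is, up to sign, the determinant of the matrix
`Heₐ(λₖ)` built from the monic Hermite polynomials `He₀, …, He₃` (`det_herm_sq`). Expanding both
determinants in the square over permutations `σ, τ` and applying Fubini turns the integral into
`∑ σ τ, sgn σ · sgn τ · ∏ₖ ∫ He_{σ k} He_{τ k} e^{-x²/2 + i sₖ x} dx` with frequencies
`s = (α, -α, 0, 0)` (`integral_kernel_mul_det_sq`).

Each one-dimensional integral is `√(2π) e^{-s²/2}` times a polynomial in `s` (`overlap`), because
integration by parts gives a two-term recursion for the moments of `e^{-x²/2 + isx}`. At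
frequency `0` the overlaps are orthogonal, `a! · δ_{ab}`, so for fixed `σ` the factors `k = 2, 3`
leave only `τ = σ` and `τ = σ ∘ (0 1)`. What remains is
`24 ∑_{a,b} (P_{aa}(α) P_{bb}(-α) - P_{ab}(α) P_{ba}(-α)) / (a! b!)`
(`double_sum_eq`), a sum of sixteen explicit polynomials (`overlap_sum`). The case `α = 0` gives
the normalization `Z = 288 (2π)²`.
-/
open MeasureTheory Complex

noncomputable section

/-- The Gaussian weight with a plane wave of frequency `s`: `e^{-x²/2} e^{isx}`. -/
def gaussKernel (s x : ℝ) : ℂ := cexp (-(x : ℂ) ^ 2 / 2) * cexp (I * s * x)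

/-- The `n`-th moment of `e^{-x²/2 + isx}`, divided by its zeroth moment `√(2π) e^{-s²/2}`; see
`integral_pow_mul_gaussKernel`. -/
def normMoment (s : ℂ) : ℕ → ℂ
  | 0 => 1
  | 1 => I * s
  | n + 2 => (n + 1) * normMoment s n + I * s * normMoment s (n + 1)

lemma integrable_pow_mul_gaussKernel (s : ℝ) (n : ℕ) :
    Integrable fun x : ℝ => (x : ℂ) ^ n * gaussKernel s x := by
  have h := integrable_rpow_mul_exp_neg_mul_sq (b := 1 / 2) (by norm_num)
    (s := n) (by have := n.cast_nonneg (α := ℝ); linarith)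
  refine h.mono (Continuous.aestronglyMeasurable (by unfold gaussKernel; fun_prop)) ?_
  refine .of_forall fun x => le_of_eq ?_
  rw [gaussKernel, norm_mul, norm_mul, norm_mul, Real.rpow_natCast, Complex.norm_exp,
    Complex.norm_exp, norm_pow, norm_pow, Complex.norm_real, Real.norm_eq_abs (Real.exp _),
    Real.abs_exp]
  have h1 : (-(x : ℂ) ^ 2 / 2).re = -(1 / 2) * x ^ 2 := by
    rw [show (-(x : ℂ) ^ 2 / 2) = ((-(1 / 2) * x ^ 2 : ℝ) : ℂ) by push_cast; ring, ofReal_re]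
  have h2 : (I * s * x).re = 0 := by simp
  rw [h1, h2, Real.exp_zero, mul_one]

/-- The Gaussian normalization `√(2π)`, in the form in which `fourierIntegral_gaussian` yields it. -/
def gaussConst : ℂ := (Real.pi / (1 / 2 : ℂ)) ^ (1 / 2 : ℂ)

lemma gaussConst_pow_four : gaussConst ^ 4 = ((2 * Real.pi) ^ 2 : ℝ) := by
  have h : gaussConst ^ 2 = 2 * Real.pi := by
    rw [gaussConst, one_div (2 : ℂ), show ((2 : ℂ)⁻¹) = ((2 : ℕ) : ℂ)⁻¹ by norm_num,
      Complex.cpow_nat_inv_pow _ two_ne_zero]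
    push_cast
    ring
  rw [show gaussConst ^ 4 = (gaussConst ^ 2) ^ 2 by ring, h]
  push_cast
  ring

lemma integral_gaussKernel (s : ℝ) :
    ∫ x : ℝ, gaussKernel s x = gaussConst * cexp (-(s : ℂ) ^ 2 / 2) := by
  have h := fourierIntegral_gaussian (b := 1 / 2) (by norm_num) (s : ℂ)
  rw [show -(s : ℂ) ^ 2 / (4 * (1 / 2)) = -(s : ℂ) ^ 2 / 2 by ring] at h
  rw [gaussConst, ← h]
  congr 1 with x
  rw [gaussKernel, mul_comm]
  congr 2
  ring

lemma hasDerivAt_gaussKernel (s x : ℝ) :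
    HasDerivAt (gaussKernel s) ((I * s - x) * gaussKernel s x) x := by
  have h : HasDerivAt (fun z : ℂ => cexp (-z ^ 2 / 2) * cexp (I * s * z))
      ((I * s - x) * gaussKernel s x) (x : ℂ) := by
    have h1 := ((((hasDerivAt_id (x : ℂ)).pow 2).neg.div_const 2).cexp).mul
      (((hasDerivAt_id (x : ℂ)).const_mul (I * s)).cexp)
    refine h1.congr_deriv ?_
    simp [gaussKernel]
    ring
  exact h.comp_ofReal

/-- Moment recursion, from the vanishing of the integral of the derivative of
`xⁿ e^{-x²/2 + isx}`. For `n = 0` the truncated `n - 1` is harmless, its coefficient being `0`. -/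
lemma integral_pow_succ_mul_gaussKernel (s : ℝ) (n : ℕ) :
    ∫ x : ℝ, (x : ℂ) ^ (n + 1) * gaussKernel s x =
      n * (∫ x : ℝ, (x : ℂ) ^ (n - 1) * gaussKernel s x)
        + I * s * ∫ x : ℝ, (x : ℂ) ^ n * gaussKernel s x := by
  have hI := integrable_pow_mul_gaussKernel s
  have hd (x : ℝ) : HasDerivAt (fun x : ℝ => (x : ℂ) ^ n * gaussKernel s x)
      (n * ((x : ℂ) ^ (n - 1) * gaussKernel s x) + I * s * ((x : ℂ) ^ n * gaussKernel s x)
        - (x : ℂ) ^ (n + 1) * gaussKernel s x) x := by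
    have h1 := ((hasDerivAt_pow n (x : ℂ)).comp_ofReal).mul (hasDerivAt_gaussKernel s x)
    exact h1.congr_deriv (by ring)
  have hJ : Integrable fun x : ℝ => (n : ℂ) * ((x : ℂ) ^ (n - 1) * gaussKernel s x)
      + I * s * ((x : ℂ) ^ n * gaussKernel s x) :=
    ((hI (n - 1)).const_mul _).add ((hI n).const_mul _)
  have h := integral_eq_zero_of_hasDerivAt_of_integrable hd (hJ.sub (hI (n + 1))) (hI n)
  rw [integral_sub hJ (hI (n + 1)),
    integral_add ((hI (n - 1)).const_mul _) ((hI n).const_mul _), integral_const_mul,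
    integral_const_mul] at h
  exact (sub_eq_zero.mp h).symm

lemma integral_pow_mul_gaussKernel (s : ℝ) (n : ℕ) :
    ∫ x : ℝ, (x : ℂ) ^ n * gaussKernel s x =
      gaussConst * cexp (-(s : ℂ) ^ 2 / 2) * normMoment s n := by
  induction n using Nat.twoStepInduction with
  | zero => simp [integral_gaussKernel, normMoment]
  | one =>
    have h := integral_pow_succ_mul_gaussKernel s 0
    simp only [zero_add, CharP.cast_eq_zero, zero_mul, pow_zero, one_mul,
      integral_gaussKernel] at h
    rw [h, normMoment]
    ring
  | more n h0 h1 =>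
    rw [integral_pow_succ_mul_gaussKernel, Nat.add_sub_cancel, h0, h1, normMoment]
    push_cast
    ring

/-- Coefficients of the monic Hermite polynomials `1, x, x² - 1, x³ - 3x`: the entry
`hermCoeff a k` is the coefficient of `xᵏ` in `Heₐ`. -/
def hermCoeff : Fin 4 → Fin 4 → ℂ :=
  ![![1, 0, 0, 0], ![0, 1, 0, 0], ![-1, 0, 1, 0], ![0, -3, 0, 1]]

/-- The monic Hermite polynomial `Heₐ`, for `a ≤ 3`, as a function on `ℂ`. -/
def herm (a : Fin 4) (x : ℂ) : ℂ := ∑ k : Fin 4, hermCoeff a k * x ^ (k : ℕ)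

/-- The coefficient matrix of the Hermite polynomials is unitriangular, so the Hermite determinant
equals the Vandermonde determinant. -/
lemma det_herm_sq (x : Fin 4 → ℂ) :
    (Matrix.of fun a k : Fin 4 => herm a (x k)).det ^ 2 =
      ∏ i : Fin 4, ∏ j ∈ Finset.Ioi i, (x i - x j) ^ 2 := by
  have h : (Matrix.of fun a k : Fin 4 => herm a (x k)) =
      Matrix.of hermCoeff * (Matrix.vandermonde x).transpose := by
    ext a k
    simp [Matrix.mul_apply, herm, Matrix.vandermonde]
  have h1 : (Matrix.of hermCoeff).det = 1 := by
    rw [Matrix.det_of_isLowerTriangular]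
    · simp [Fin.prod_univ_four, hermCoeff]
    · intro i j hij
      fin_cases i <;> fin_cases j <;> first | exact absurd hij (by decide) | simp [hermCoeff]
  rw [h, Matrix.det_mul, h1, one_mul, Matrix.det_transpose, Matrix.det_vandermonde]
  simp_rw [← Finset.prod_pow]
  exact Finset.prod_congr rfl fun i _ => Finset.prod_congr rfl fun j _ => by ring

/-- The integral of `Heₐ Heᵦ e^{-x²/2 + isx}` divided by `√(2π) e^{-s²/2}`; see
`integral_herm_mul_herm`. -/
def overlap (s : ℂ) (a b : Fin 4) : ℂ :=
  ∑ k : Fin 4, ∑ l : Fin 4, hermCoeff a k * hermCoeff b l * normMoment s (k + l)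

lemma herm_mul_herm (a b : Fin 4) (s x : ℝ) :
    herm a x * herm b x * gaussKernel s x = ∑ k : Fin 4, ∑ l : Fin 4,
      hermCoeff a k * hermCoeff b l * ((x : ℂ) ^ ((k : ℕ) + l) * gaussKernel s x) := by
  simp_rw [herm, Finset.sum_mul_sum, Finset.sum_mul]
  exact Finset.sum_congr rfl fun i _ => Finset.sum_congr rfl fun j _ => by ring

lemma integrable_herm_mul_herm (a b : Fin 4) (s : ℝ) :
    Integrable fun x : ℝ => herm a x * herm b x * gaussKernel s x := by
  simp_rw [herm_mul_herm]
  exact integrable_finsetSum _ fun k _ => integrable_finsetSum _ fun l _ =>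
    (integrable_pow_mul_gaussKernel s _).const_mul _

lemma integral_herm_mul_herm (a b : Fin 4) (s : ℝ) :
    ∫ x : ℝ, herm a x * herm b x * gaussKernel s x =
      gaussConst * cexp (-(s : ℂ) ^ 2 / 2) * overlap s a b := by
  simp_rw [herm_mul_herm]
  rw [integral_finsetSum _ fun k _ => integrable_finsetSum _ fun l _ =>
    (integrable_pow_mul_gaussKernel s _).const_mul _, overlap, Finset.mul_sum]
  refine Finset.sum_congr rfl fun k _ => ?_
  rw [integral_finsetSum _ fun l _ => (integrable_pow_mul_gaussKernel s _).const_mul _,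
    Finset.mul_sum]
  refine Finset.sum_congr rfl fun l _ => ?_
  rw [integral_const_mul, integral_pow_mul_gaussKernel]
  ring

/-- Andréief-type identity: the squared determinant is expanded over pairs of permutations and
integrated one variable at a time. -/
lemma integral_kernel_mul_det_sq (s : Fin 4 → ℝ) :
    ∫ l : Fin 4 → ℝ, (∏ k, gaussKernel (s k) (l k)) *
        (Matrix.of fun a k : Fin 4 => herm a (l k)).det ^ 2 =
      ∑ σ : Equiv.Perm (Fin 4), ∑ τ : Equiv.Perm (Fin 4),
        ((σ.sign : ℤ) : ℂ) * ((τ.sign : ℤ) : ℂ) *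
          ∏ k, (gaussConst * cexp (-(s k : ℂ) ^ 2 / 2) * overlap (s k) (σ k) (τ k)) := by
  have key (l : Fin 4 → ℝ) : (∏ k, gaussKernel (s k) (l k)) *
        (Matrix.of fun a k : Fin 4 => herm a (l k)).det ^ 2 =
      ∑ σ : Equiv.Perm (Fin 4), ∑ τ : Equiv.Perm (Fin 4),
        ((σ.sign : ℤ) : ℂ) * ((τ.sign : ℤ) : ℂ) *
          ∏ k, (herm (σ k) (l k) * herm (τ k) (l k) * gaussKernel (s k) (l k)) := by
    rw [Matrix.det_apply', sq, Finset.sum_mul_sum, Finset.mul_sum]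
    refine Finset.sum_congr rfl fun σ _ => ?_
    rw [Finset.mul_sum]
    refine Finset.sum_congr rfl fun τ _ => ?_
    simp only [Finset.prod_mul_distrib, Matrix.of_apply]
    ring
  have hint (σ τ : Equiv.Perm (Fin 4)) : Integrable fun l : Fin 4 → ℝ =>
      ((σ.sign : ℤ) : ℂ) * ((τ.sign : ℤ) : ℂ) *
          ∏ k, (herm (σ k) (l k) * herm (τ k) (l k) * gaussKernel (s k) (l k)) :=
    (Integrable.fintype_prod (f := fun k (x : ℝ) =>
      herm (σ k) x * herm (τ k) x * gaussKernel (s k) x)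
      fun k => integrable_herm_mul_herm (σ k) (τ k) (s k)).const_mul _
  simp_rw [key]
  rw [integral_finsetSum _ fun σ _ => integrable_finsetSum _ fun τ _ => hint σ τ]
  refine Finset.sum_congr rfl fun σ _ => ?_
  rw [integral_finsetSum _ fun τ _ => hint σ τ]
  refine Finset.sum_congr rfl fun τ _ => ?_
  rw [integral_const_mul, integral_fintype_prod_volume_eq_prod
    (f := fun k (x : ℝ) => herm (σ k) x * herm (τ k) x * gaussKernel (s k) x)]
  simp_rw [integral_herm_mul_herm]

/-- Orthogonality of the Hermite polynomials. -/
lemma overlap_zero (a b : Fin 4) :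
    overlap 0 a b = if a = b then ((a : ℕ).factorial : ℂ) else 0 := by
  fin_cases a <;> fin_cases b <;>
    simp [overlap, hermCoeff, normMoment, Fin.sum_univ_four, Nat.factorial] <;> norm_num

lemma card_perm_fiber : ∀ a b : Fin 4, a ≠ b →
    (Finset.univ.filter fun σ : Equiv.Perm (Fin 4) => (σ 0, σ 1) = (a, b)).card = 2 := by
  decide +kernel

lemma sum_perm_eq (F : Fin 4 → Fin 4 → ℂ) (hF : ∀ a, F a a = 0) :
    ∑ σ : Equiv.Perm (Fin 4), F (σ 0) (σ 1) = 2 * ∑ a, ∑ b, F a b := by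
  rw [← Finset.sum_fiberwise _ (fun σ : Equiv.Perm (Fin 4) => (σ 0, σ 1)), Fintype.sum_prod_type,
    Finset.mul_sum]
  refine Finset.sum_congr rfl fun a _ => ?_
  rw [Finset.mul_sum]
  refine Finset.sum_congr rfl fun b _ => ?_
  rw [Finset.sum_congr rfl (g := fun _ => F a b)]
  · rw [Finset.sum_const, nsmul_eq_mul]
    rcases eq_or_ne a b with rfl | h
    · simp [hF]
    · rw [card_perm_fiber a b h]; norm_num
  · intro σ hσ
    simp only [Finset.mem_filter, Prod.mk.injEq] at hσ
    rw [hσ.2.1, hσ.2.2]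

lemma perm_eq_of_fix : ∀ σ τ : Equiv.Perm (Fin 4), σ 2 = τ 2 → σ 3 = τ 3 →
    τ = σ ∨ τ = σ * Equiv.swap 0 1 := by
  decide +kernel

lemma factorial_perm : ∀ σ : Equiv.Perm (Fin 4),
    (σ 0 : ℕ).factorial * (σ 1 : ℕ).factorial * ((σ 2 : ℕ).factorial * (σ 3 : ℕ).factorial)
     = 12 := by
  decide +kernel

/-- The two frequency-zero factors restrict the double sum to `τ = σ` and `τ = σ ∘ (0 1)`. Their
product is `(σ 2)! (σ 3)! = 12 / ((σ 0)! (σ 1)!)`, and each pair `a ≠ b` is `(σ 0, σ 1)` for exactly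
two permutations, whence the factor `24`; the diagonal terms `a = b` vanish. -/
lemma double_sum_eq (p q : Fin 4 → Fin 4 → ℂ) :
    ∑ σ : Equiv.Perm (Fin 4), ∑ τ : Equiv.Perm (Fin 4),
      ((σ.sign : ℤ) : ℂ) * ((τ.sign : ℤ) : ℂ) *
        (p (σ 0) (τ 0) * q (σ 1) (τ 1) * overlap 0 (σ 2) (τ 2) * overlap 0 (σ 3) (τ 3)) =
      24 * ∑ a : Fin 4, ∑ b : Fin 4, (p a a * q b b - p a b * q b a) /
        ((a : ℕ).factorial * (b : ℕ).factorial) := by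
  have inner (σ : Equiv.Perm (Fin 4)) : ∑ τ : Equiv.Perm (Fin 4),
      ((σ.sign : ℤ) : ℂ) * ((τ.sign : ℤ) : ℂ) *
        (p (σ 0) (τ 0) * q (σ 1) (τ 1) * overlap 0 (σ 2) (τ 2) * overlap 0 (σ 3) (τ 3)) =
      12 * ((p (σ 0) (σ 0) * q (σ 1) (σ 1) - p (σ 0) (σ 1) * q (σ 1) (σ 0)) /
        ((σ 0 : ℕ).factorial * (σ 1 : ℕ).factorial)) := by
    have hne : σ ≠ σ * Equiv.swap 0 1 := by
      intro h
      have := congrArg (fun π : Equiv.Perm (Fin 4) => π 0) h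
      simp at this
    rw [← Finset.sum_subset (Finset.subset_univ {σ, σ * Equiv.swap 0 1})]
    · have hs : ((σ.sign : ℤ) : ℂ) * ((σ.sign : ℤ) : ℂ) = 1 := by
        rw [← Int.cast_mul, Int.units_coe_mul_self, Int.cast_one]
      have h2 : Equiv.swap (0 : Fin 4) 1 2 = 2 := by decide
      have h3 : Equiv.swap (0 : Fin 4) 1 3 = 3 := by decide
      have hf : ((σ 0 : ℕ).factorial : ℂ) * ((σ 1 : ℕ).factorial : ℂ) *
          (((σ 2 : ℕ).factorial : ℂ) * ((σ 3 : ℕ).factorial : ℂ)) = 12 := by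
        exact_mod_cast factorial_perm σ
      have hn0 : ((σ 0 : ℕ).factorial : ℂ) ≠ 0 := by exact_mod_cast Nat.factorial_ne_zero _
      have hn1 : ((σ 1 : ℕ).factorial : ℂ) ≠ 0 := by exact_mod_cast Nat.factorial_ne_zero _
      rw [Finset.sum_pair hne]
      simp only [Equiv.Perm.sign_mul, Equiv.Perm.sign_swap (show (0 : Fin 4) ≠ 1 by decide),
        Equiv.Perm.mul_apply, Equiv.swap_apply_left, Equiv.swap_apply_right, h2, h3,
        overlap_zero, if_true]
      push_cast
      rw [← hf]
      field_simp
      linear_combination ((σ 2 : ℕ).factorial : ℂ) * ((σ 3 : ℕ).factorial : ℂ) *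
        (p (σ 0) (σ 0) * q (σ 1) (σ 1) - p (σ 0) (σ 1) * q (σ 1) (σ 0)) * hs
    · intro τ _ hτ
      simp only [Finset.mem_insert, Finset.mem_singleton] at hτ
      simp only [overlap_zero]
      by_cases h2 : σ 2 = τ 2
      · by_cases h3 : σ 3 = τ 3
        · exact absurd (perm_eq_of_fix σ τ h2 h3) hτ
        · simp [h3]
      · simp [h2]
  simp_rw [inner]
  rw [← Finset.mul_sum, sum_perm_eq (fun a b => (p a a * q b b - p a b * q b a) /
        ((a : ℕ).factorial * (b : ℕ).factorial)) (fun a => by simp)]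
  ring

lemma overlap_sum (s : ℂ) :
    ∑ a : Fin 4, ∑ b : Fin 4, (overlap s a a * overlap (-s) b b - overlap s a b * overlap (-s) b a)
      / ((a : ℕ).factorial * (b : ℕ).factorial) =
    (1 / 3) * (-s ^ 10 + (25 / 2) * s ^ 8 - 64 * s ^ 6 + 138 * s ^ 4 - 144 * s ^ 2 + 36) := by
  have hI : I ^ 2 = -1 := I_sq
  have hI4 : I ^ 4 = 1 := I_pow_four
  have hI6 : I ^ 6 = -1 := by rw [show I ^ 6 = I ^ 4 * I ^ 2 by ring, hI4, hI]; ring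
  have hI8 : I ^ 8 = 1 := by rw [show I ^ 8 = (I ^ 4) ^ 2 by ring, hI4]; ring
  have hI10 : I ^ 10 = -1 := by rw [show I ^ 10 = I ^ 8 * I ^ 2 by ring, hI8, hI]; ring
  simp [overlap, hermCoeff, normMoment, Fin.sum_univ_four, Nat.factorial]
  ring_nf
  simp only [hI, hI4, hI6, hI8, hI10]
  ring

end

/-- The GUE(4) spectral-form-factor-type average: with the (unnormalized) GUE(4) joint
eigenvalue density `∏ e^{-λᵢ²/2} ∏_{i<j} (λᵢ-λⱼ)²` of normalization `Z > 0`,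
`(1/Z) ∫ e^{iα(λ₁-λ₂)} = (1/36) e^{-α²}(-α¹⁰ + (25/2)α⁸ - 64α⁶ + 138α⁴ - 144α² + 36)`. -/
theorem gue4_form_factor (α : ℝ) :
    let w : (Fin 4 → ℝ) → ℝ := fun l =>
      (∏ i : Fin 4, Real.exp (-(l i) ^ 2 / 2)) *
        ∏ i : Fin 4, ∏ j ∈ Finset.Ioi i, (l i - l j) ^ 2
    let Z : ℝ := ∫ l : Fin 4 → ℝ, w l
    0 < Z ∧
      (1 / (Z : ℂ)) *
          (∫ l : Fin 4 → ℝ, (w l : ℂ) * Complex.exp (Complex.I * (α : ℂ) * ((l 0 : ℂ) - (l 1 : ℂ))))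
        = (1 / 36) * Complex.exp (-(α : ℂ) ^ 2) *
            (-(α : ℂ) ^ 10 + (25 / 2) * (α : ℂ) ^ 8 - 64 * (α : ℂ) ^ 6 + 138 * (α : ℂ) ^ 4 -
              144 * (α : ℂ) ^ 2 + 36) := by
  intro w Z
  have J (α : ℝ) : ∫ l : Fin 4 → ℝ,
      (w l : ℂ) * cexp (I * (α : ℂ) * ((l 0 : ℂ) - (l 1 : ℂ))) =
      8 * ((2 * Real.pi) ^ 2 : ℝ) * cexp (-(α : ℂ) ^ 2) *
        (-(α : ℂ) ^ 10 + (25 / 2) * (α : ℂ) ^ 8 - 64 * (α : ℂ) ^ 6 + 138 * (α : ℂ) ^ 4 -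
          144 * (α : ℂ) ^ 2 + 36) := by
    -- The plane wave `e^{iα(λ₁ - λ₂)}` is distributed over the coordinates with frequencies
    -- `α, -α, 0, 0`.
    have h := integral_kernel_mul_det_sq ![α, -α, 0, 0]
    have hw (l : Fin 4 → ℝ) : (w l : ℂ) * cexp (I * (α : ℂ) * ((l 0 : ℂ) - (l 1 : ℂ))) =
        (∏ k, gaussKernel ((![α, -α, 0, 0] : Fin 4 → ℝ) k) (l k)) *
        (Matrix.of fun a k : Fin 4 => herm a (l k)).det ^ 2 := by
      rw [det_herm_sq (fun k => (l k : ℂ))]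
      have he : cexp (I * (α : ℂ) * ((l 0 : ℂ) - (l 1 : ℂ))) =
          cexp (I * α * l 0) * cexp (I * (-α : ℝ) * l 1) := by
        rw [← Complex.exp_add]; push_cast; ring_nf
      rw [he]
      simp only [w]
      push_cast
      simp only [Fin.prod_univ_four, gaussKernel, Matrix.cons_val]
      simp
      ring
    simp_rw [hw, h]
    have hp (σ τ : Equiv.Perm (Fin 4)) :
        ((σ.sign : ℤ) : ℂ) * ((τ.sign : ℤ) : ℂ) *
          ∏ k, (gaussConst * cexp (-(((![α, -α, 0, 0] : Fin 4 → ℝ) k : ℝ) : ℂ) ^ 2 / 2) *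
            overlap ((![α, -α, 0, 0] : Fin 4 → ℝ) k : ℝ) (σ k) (τ k)) =
        gaussConst ^ 4 * cexp (-(α : ℂ) ^ 2) * (((σ.sign : ℤ) : ℂ) * ((τ.sign : ℤ) : ℂ) *
          (overlap α (σ 0) (τ 0) * overlap (-α) (σ 1) (τ 1) * overlap 0 (σ 2) (τ 2) *
            overlap 0 (σ 3) (τ 3))) := by
      have he : cexp (-(α : ℂ) ^ 2) = cexp (-(α : ℂ) ^ 2 / 2) * cexp (-(α : ℂ) ^ 2 / 2) := by
        rw [← Complex.exp_add]; ring_nf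
      rw [he]
      simp [Fin.prod_univ_four]
      ring
    simp_rw [hp, ← Finset.mul_sum]
    rw [double_sum_eq, overlap_sum, gaussConst_pow_four]
    ring
  have hZ : Z = 288 * (2 * Real.pi) ^ 2 := by
    have h := J 0
    simp only [ofReal_zero, mul_zero, zero_mul, Complex.exp_zero, mul_one] at h
    rw [integral_complex_ofReal] at h
    apply Complex.ofReal_injective
    refine h.trans ?_
    push_cast
    norm_num
    ring
  have hpos : 0 < Z := by rw [hZ]; positivity
  refine ⟨hpos, ?_⟩
  have hpi : (Real.pi : ℂ) ≠ 0 := by exact_mod_cast Real.pi_ne_zero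
  rw [J, hZ]
  push_cast
  field_simp
  ring
end

section
/- Let L be a positive natural number and let σ be a permutation of Fin L. Then there exist permutations τ₁ and τ₂ of Fin L with τ₁² = 1 and τ₂² = 1 (involutions) such that σ = τ₂ * τ₁ and (card of support of τ₁) + (card of support of τ₂) = 2 (L - c), where c is the number of orbits of the cyclic group generated by σ acting on Fin L (the number of cycles of σ, counting fixed points as 1-cycles). -/
/-!
On a single cycle of length `n`, identified with `ZMod n` so that `σ` is `k ↦ k + 1`, the rotation
is the composite of the two reflections `k ↦ -k` and `k ↦ 1 - k`. These reflections have exactly two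
fixed points between them, whatever the parity of `n` (`card_fix_refl`). Choosing a base point in
every orbit identifies `Fin L` with a disjoint union of such cycles (`exists_coords`), and performing
the reflections on all cycles at once gives `τ₁` and `τ₂` with `2 c` fixed points in total, hence
with supports of total size `2 L - 2 c`.
-/

/-- The solutions of `2 k = 0` and of `2 k = 1` in `ZMod n` are two in total: `0` and `n / 2` for the
first equation if `n` is even, and one solution of each equation if `n` is odd. -/
lemma card_fix_refl (n : ℕ) [NeZero n] :
    (∑ k : ZMod n, if -k = k then 1 else 0) + (∑ k : ZMod n, if 1 - k = k then 1 else 0) = 2 := by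
  have h0 : ∀ k : ZMod n, -k = k ↔ n ∣ 2 * k.val := by
    intro k
    rw [← CharP.cast_eq_zero_iff (ZMod n) n]
    push_cast
    rw [ZMod.natCast_zmod_val, neg_eq_iff_add_eq_zero, two_mul]
  have h1 : ∀ k : ZMod n, 1 - k = k ↔ (n : ℤ) ∣ 2 * k.val - 1 := by
    intro k
    rw [← CharP.intCast_eq_zero_iff (ZMod n) n]
    push_cast
    rw [ZMod.natCast_zmod_val, sub_eq_iff_eq_add, sub_eq_zero, two_mul, eq_comm]
  have hn := NeZero.pos n
  rw [← Finset.card_filter, ← Finset.card_filter]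
  rcases Nat.even_or_odd' n with ⟨m, hm | hm⟩
  · have hv : ((m : ZMod n)).val = m := ZMod.val_cast_of_lt (by omega)
    have e0 : (Finset.univ.filter fun k : ZMod n => -k = k) = {0, (m : ZMod n)} := by
      ext k
      have := k.val_lt
      simp only [Finset.mem_filter, Finset.mem_univ, true_and, Finset.mem_insert,
        Finset.mem_singleton, h0, ← (ZMod.val_injective n).eq_iff, hv, ZMod.val_zero]
      constructor
      · rintro ⟨c, hc⟩
        have : c < 2 := by by_contra! h; nlinarith
        interval_cases c <;> omega
      · rintro (h | h) <;> rw [h]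
        · simp
        · rw [hm]
    have e1 : (Finset.univ.filter fun k : ZMod n => 1 - k = k) = ∅ := by
      ext k
      simp only [Finset.mem_filter, Finset.mem_univ, true_and, h1, Finset.notMem_empty, iff_false]
      rintro ⟨c, hc⟩
      have hm' : (n : ℤ) = 2 * m := by exact_mod_cast hm
      rw [hm', mul_assoc] at hc
      omega
    rw [e0, e1, Finset.card_pair]
    · simp
    · rw [Ne, ← (ZMod.val_injective n).eq_iff, hv, ZMod.val_zero]
      omega
  · have e0 : (Finset.univ.filter fun k : ZMod n => -k = k) = {0} := by
      ext k
      have := k.val_lt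
      simp only [Finset.mem_filter, Finset.mem_univ, true_and,
        Finset.mem_singleton]
      rw [ZMod.neg_eq_self_iff]
      constructor
      · rintro (h | h)
        · exact h
        · omega
      · exact Or.inl
    have hm' : 2 * (m : ZMod n) + 1 = 0 := by
      have := ZMod.natCast_self n
      conv at this => lhs; arg 1; rw [hm]
      exact_mod_cast this
    have e1 : (Finset.univ.filter fun k : ZMod n => 1 - k = k) = {(m : ZMod n) + 1} := by
      ext k
      simp only [Finset.mem_filter, Finset.mem_univ, true_and, Finset.mem_singleton]
      constructor
      · intro h
        linear_combination (m : ZMod n) * h + (k - 1) * hm'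
      · rintro rfl
        linear_combination -hm'
    rw [e0, e1]; simp

/-- Coordinates on `Fin L` adapted to `σ`: the point `(ω, k)` is `σ ^ k` applied to a base point of
the orbit `ω`, and `n ω` is the length of that orbit. -/
lemma exists_coords (L : ℕ) (σ : Equiv.Perm (Fin L)) :
    ∃ (n : MulAction.orbitRel.Quotient (Subgroup.zpowers σ) (Fin L) → ℕ) (_ : ∀ ω, NeZero (n ω))
      (e : Fin L ≃ Σ ω, ZMod (n ω)), ∀ ω k, σ (e.symm ⟨ω, k⟩) = e.symm ⟨ω, k + 1⟩ := by
  refine ⟨fun ω => Function.minimalPeriod (σ • ·) ω.out, fun ω => ⟨?_⟩,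
    (MulAction.selfEquivSigmaOrbits (Subgroup.zpowers σ) (Fin L)).trans
      (Equiv.sigmaCongrRight fun ω => MulAction.orbitZPowersEquiv σ ω.out), fun ω k => ?_⟩
  · exact (Function.minimalPeriod_pos_of_mem_periodicPts
      ((MulAction.injective σ).mem_periodicPts _)).ne'
  · have key : ∀ k : ZMod (Function.minimalPeriod (σ • ·) ω.out),
      ((MulAction.selfEquivSigmaOrbits (Subgroup.zpowers σ) (Fin L)).trans
      (Equiv.sigmaCongrRight fun ω => MulAction.orbitZPowersEquiv σ ω.out)).symm ⟨ω, k⟩ =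
        (((MulAction.orbitZPowersEquiv σ ω.out).symm k : _) : Fin L) := fun k => rfl
    rw [key, key]
    obtain ⟨k, rfl⟩ := ZMod.intCast_surjective k
    have : (k : ZMod (Function.minimalPeriod (σ • ·) ω.out)) + 1 = ((1 + k : ℤ)) := by
      push_cast; ring
    rw [this, MulAction.orbitZPowersEquiv_symm_apply', MulAction.orbitZPowersEquiv_symm_apply',
      zpow_add]
    rfl

/-- Counts the fixed points of a permutation preserving each cycle, in coordinates. -/
lemma card_fix_conj {L : ℕ} {ι : Type*} [Fintype ι] {n : ι → ℕ} [∀ ω, NeZero (n ω)]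
    (e : Fin L ≃ Σ ω, ZMod (n ω)) (τ : Equiv.Perm (Fin L)) (f : ∀ ω, ZMod (n ω) → ZMod (n ω))
    (h : ∀ ω k, τ (e.symm ⟨ω, k⟩) = e.symm ⟨ω, f ω k⟩) :
    τ.support.card + ∑ ω, ∑ k : ZMod (n ω), (if f ω k = k then 1 else 0) = L := by
  have h1 : ∑ ω, ∑ k : ZMod (n ω), (if f ω k = k then 1 else 0)
      = (Finset.univ.filter fun x => τ x = x).card := by
    rw [Finset.card_filter, ← e.symm.sum_comp, Fintype.sum_sigma]
    simp [h]
  have h2 := Finset.card_filter_add_card_filter_not (s := (Finset.univ : Finset (Fin L)))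
    (fun x => τ x = x)
  rw [h1, add_comm]
  simpa [Equiv.Perm.support] using h2

/-- On a fully connected architecture every permutation `σ` of `L` qubits factors into
two layers of disjoint swaps (involutions `τ₁`, `τ₂`) using `L - c` swaps in total,
where `c` is the number of cycles of `σ` (orbits of the cyclic group it generates,
counting fixed points): `σ = τ₂ * τ₁` with
`|support τ₁| + |support τ₂| = 2 (L - c)`. -/
theorem perm_two_involution_layers (L : ℕ) (hL : 0 < L) (σ : Equiv.Perm (Fin L)) :
    ∃ τ₁ τ₂ : Equiv.Perm (Fin L),
      τ₁ * τ₁ = 1 ∧ τ₂ * τ₂ = 1 ∧ σ = τ₂ * τ₁ ∧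
      τ₁.support.card + τ₂.support.card =
        2 * (L - Nat.card (MulAction.orbitRel.Quotient (Subgroup.zpowers σ) (Fin L))) := by
  classical
  obtain ⟨n, hn, e, he⟩ := exists_coords L σ
  let τ₁ : Equiv.Perm (Fin L) :=
    e.trans ((Equiv.sigmaCongrRight fun ω => Equiv.neg (ZMod (n ω))).trans e.symm)
  let τ₂ : Equiv.Perm (Fin L) :=
    e.trans ((Equiv.sigmaCongrRight fun ω => Equiv.subLeft (1 : ZMod (n ω))).trans e.symm)
  have a₁ : ∀ ω k, τ₁ (e.symm ⟨ω, k⟩) = e.symm ⟨ω, -k⟩ := fun ω k => by simp [τ₁]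
  have a₂ : ∀ ω k, τ₂ (e.symm ⟨ω, k⟩) = e.symm ⟨ω, 1 - k⟩ := fun ω k => by simp [τ₂]
  refine ⟨τ₁, τ₂, ?_, ?_, ?_, ?_⟩
  · ext x
    obtain ⟨⟨ω, k⟩, rfl⟩ := e.symm.surjective x
    simp [a₁]
  · ext x
    obtain ⟨⟨ω, k⟩, rfl⟩ := e.symm.surjective x
    simp [a₂]
  · ext x
    obtain ⟨⟨ω, k⟩, rfl⟩ := e.symm.surjective x
    simp [a₁, a₂, he, add_comm]
  · have := Fintype.ofFinite (MulAction.orbitRel.Quotient (Subgroup.zpowers σ) (Fin L))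
    have c₁ := card_fix_conj e τ₁ (fun ω k => -k) a₁
    have c₂ := card_fix_conj e τ₂ (fun ω k => 1 - k) a₂
    have c := Finset.sum_congr rfl fun ω (_ : ω ∈ Finset.univ) => card_fix_refl (n ω)
    rw [Finset.sum_add_distrib] at c
    simp only [Finset.sum_const, Finset.card_univ, smul_eq_mul] at c
    rw [Nat.card_eq_fintype_card]
    omega
end

section
/- Let L be a positive natural number and define δ : ℝ → ℝ by δ(p) = (1/L!) · Σ_{σ : Equiv.Perm (Fin L)} 4^{c(σ)} · (4 - 3p)^{L - c(σ)}, where c(σ) is the number of orbits of the cyclic group generated by σ acting on Fin L. Then δ(0) = 4^L and the derivative of δ at p = 0 equals -(3/4) · 4^L · (L - H_L), where H_L = Σ_{k=1}^{L} 1/k; consequently -δ'(0)/δ(0) = (3/4)(L - H_L). -/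
/-!
Differentiating termwise at `p = 0`, every summand has the common factor `4 ^ L`, so
`δ'(0) = -(3/4) · 4 ^ L · (L - E)`, where `E` is the mean number of cycles of a uniformly random
permutation. The claim thus reduces to `∑ σ, c(σ) = L! · H_L` (`sum_card_cycleSet`).

This is proved by induction on `L`. A permutation of `Fin (n + 1)` is uniquely of the form
`swap 0 p * e`, with `e` a permutation of `Fin n` shifted to the nonzero elements
(`Equiv.Perm.decomposeFin`). For `p = 0` the point `0` is a new fixed point, and there is one more
cycle than in `e`; for `p ≠ 0` the point `0` is inserted into the cycle of `p`, and the number of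
cycles is unchanged. Hence the sum `S n` of the cycle numbers satisfies
`S (n + 1) = (n + 1) * S n + n!`.
-/

/-- The set of cycles of `σ`, fixed points included, as orbits of the generated subgroup. -/
abbrev CycleSet {α : Type*} (σ : Equiv.Perm α) : Type _ :=
  MulAction.orbitRel.Quotient (Subgroup.zpowers σ) α

namespace CycleSet

variable {α β : Type*} (σ : Equiv.Perm α)

/-- The cycle of `σ` containing a given point. -/
def mk (x : α) : CycleSet σ := Quotient.mk _ x

theorem mk_apply (x : α) : mk σ (σ x) = mk σ x :=
  Quotient.sound ⟨⟨σ, Subgroup.mem_zpowers σ⟩, rfl⟩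

theorem mk_surjective : Function.Surjective (mk σ) := Quotient.mk_surjective

theorem eq_of_invariant (f : α → β) (h : ∀ x, f (σ x) = f x) {x y : α}
    (hxy : MulAction.orbitRel (Subgroup.zpowers σ) α x y) : f x = f y := by
  obtain ⟨⟨_, k, rfl⟩, rfl⟩ := hxy
  refine zpow_induction_right (P := fun g : Equiv.Perm α => ∀ y, f (g y) = f y)
    (fun _ => rfl) (fun g ih y => (ih (σ y)).trans (h y)) (fun g ih y => ?_) k y
  refine (ih (σ⁻¹ y)).trans ?_
  rw [← h (σ⁻¹ y)]
  exact congrArg f (σ.apply_symm_apply y)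

/-- A `σ`-invariant function descends to the cycles of `σ`. -/
def lift (f : α → β) (h : ∀ x, f (σ x) = f x) : CycleSet σ → β :=
  Quotient.lift f fun _ _ hxy => eq_of_invariant σ f h hxy

@[simp] theorem lift_mk (f : α → β) (h : ∀ x, f (σ x) = f x) (x : α) :
    lift σ f h (mk σ x) = f x := rfl

open Equiv.Perm

theorem card_decomposeFin_zero {n : ℕ} (e : Equiv.Perm (Fin n)) :
    Nat.card (CycleSet (decomposeFin.symm (0, e))) = Nat.card (CycleSet e) + 1 := by
  rw [← Finite.card_option]
  set σ := decomposeFin.symm (0, e) with hσ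
  have hs : ∀ x : Fin n, σ x.succ = (e x).succ := fun x => by simp [hσ]
  have h0 : σ 0 = 0 := by simp [hσ]
  refine Nat.card_congr
    { toFun := lift σ (Fin.cases none fun x => some (mk e x)) ?_
      invFun := fun o => o.elim (mk σ 0) (lift e (fun x => mk σ x.succ) ?_)
      left_inv := ?_
      right_inv := ?_ }
  · intro x
    cases x using Fin.cases with
    | zero => rw [h0]
    | succ x => simp [hs, mk_apply]
  · intro x
    rw [← hs, mk_apply]
  · intro q
    obtain ⟨x, rfl⟩ := mk_surjective σ q
    cases x using Fin.cases <;> simp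
  · rintro (_ | q)
    · simp
    · obtain ⟨x, rfl⟩ := mk_surjective e q
      simp

theorem card_decomposeFin_succ {n : ℕ} (a : Fin n) (e : Equiv.Perm (Fin n)) :
    Nat.card (CycleSet (decomposeFin.symm (a.succ, e))) = Nat.card (CycleSet e) := by
  set σ := decomposeFin.symm (a.succ, e) with hσ
  have hs : ∀ x : Fin n, σ x.succ = if e x = a then 0 else (e x).succ := fun x => by
    simp [hσ, Equiv.swap_apply_def]
  have h0 : σ 0 = a.succ := by simp [hσ]
  have hmk : mk σ a.succ = mk σ 0 := by rw [← h0, mk_apply]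
  refine Nat.card_congr
    { toFun := lift σ (Fin.cases (mk e a) fun x => mk e x) ?_
      invFun := lift e (fun x => mk σ x.succ) ?_
      left_inv := ?_
      right_inv := ?_ }
  · intro x
    cases x using Fin.cases with
    | zero => simp [h0]
    | succ x =>
      rw [hs]
      split_ifs with h
      · simp [← h, mk_apply]
      · simp [mk_apply]
  · intro x
    have h := mk_apply σ x.succ
    rw [hs] at h
    split_ifs at h with hx
    · rw [hx, hmk, h]
    · exact h
  · intro q
    obtain ⟨x, rfl⟩ := mk_surjective σ q
    cases x using Fin.cases <;> simp [hmk]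
  · intro q
    obtain ⟨x, rfl⟩ := mk_surjective e q
    simp

theorem card_le {n : ℕ} (σ : Equiv.Perm (Fin n)) : Nat.card (CycleSet σ) ≤ n := by
  simpa using Nat.card_le_card_of_surjective _ (mk_surjective σ)

end CycleSet

theorem sum_card_cycleSet (n : ℕ) :
    ∑ σ : Equiv.Perm (Fin n), (Nat.card (CycleSet σ) : ℝ) =
      n.factorial * ∑ k ∈ Finset.Icc 1 n, (1 : ℝ) / k := by
  induction n with
  | zero =>
    simp only [Finset.univ_unique, Finset.sum_singleton]
    simp
  | succ n ih =>
    rw [← Equiv.sum_comp Equiv.Perm.decomposeFin.symm, Fintype.sum_prod_type,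
      Fin.sum_univ_succ]
    simp only [CycleSet.card_decomposeFin_zero, CycleSet.card_decomposeFin_succ]
    push_cast
    rw [Finset.sum_add_distrib, Finset.sum_const, ih, Finset.sum_const,
      Finset.sum_Icc_succ_top (by omega), Nat.factorial_succ]
    simp only [Finset.card_univ, Fintype.card_perm, Fintype.card_fin, nsmul_eq_mul, mul_one]
    push_cast
    field_simp
    ring


/-- For the average error factor
`δ(p) = (1/L!) Σ_σ 4^{c(σ)} (4-3p)^{L-c(σ)}` of faulty permutations on a fully
connected architecture, `δ(0) = 4^L` and `δ'(0) = -(3/4)·4^L·(L - H_L)`, so that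
`-δ'(0)/δ(0) = (3/4)(L - H_L)`, with `H_L` the `L`-th harmonic number and `c(σ)` the
number of cycles of `σ` (orbits of the generated cyclic group, counting fixed points). -/
theorem error_factor_deriv_at_zero (L : ℕ) (hL : 0 < L) :
    let c : Equiv.Perm (Fin L) → ℕ := fun σ =>
      Nat.card (MulAction.orbitRel.Quotient (Subgroup.zpowers σ) (Fin L))
    let δ : ℝ → ℝ := fun p =>
      (1 / (Nat.factorial L : ℝ)) *
        ∑ σ : Equiv.Perm (Fin L), (4 : ℝ) ^ c σ * (4 - 3 * p) ^ (L - c σ)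
    let H : ℝ := ∑ k ∈ Finset.Icc 1 L, (1 : ℝ) / k
    δ 0 = 4 ^ L ∧
      deriv δ 0 = -(3 / 4) * 4 ^ L * ((L : ℝ) - H) ∧
      -(deriv δ 0) / δ 0 = (3 / 4) * ((L : ℝ) - H) := by
  intro c δ H
  have hc : ∀ σ, c σ ≤ L := fun σ => CycleSet.card_le σ
  have hsum : ∑ σ, (c σ : ℝ) = L.factorial * H := sum_card_cycleSet L
  have hf : (L.factorial : ℝ) ≠ 0 := by positivity
  have hδ : δ 0 = 4 ^ L := by
    simp only [δ, mul_zero, sub_zero, ← pow_add, Nat.add_sub_cancel' (hc _), Finset.sum_const,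
      Finset.card_univ, Fintype.card_perm, Fintype.card_fin, nsmul_eq_mul]
    field_simp
  have hderiv : HasDerivAt δ (-(3 / 4) * 4 ^ L * ((L : ℝ) - H)) 0 := by
    have hlin : HasDerivAt (fun p : ℝ => 4 - 3 * p) (-3) 0 := by
      simpa using ((hasDerivAt_id (0 : ℝ)).const_mul 3).const_sub 4
    have hterm : ∀ σ, HasDerivAt (fun p : ℝ => (4 : ℝ) ^ c σ * (4 - 3 * p) ^ (L - c σ))
        (-(3 / 4) * 4 ^ L * ((L : ℝ) - c σ)) 0 := by
      intro σ
      refine ((hlin.pow (L - c σ)).const_mul ((4 : ℝ) ^ c σ)).congr_deriv ?_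
      obtain ⟨m, hm⟩ := Nat.exists_eq_add_of_le (hc σ)
      rw [hm, Nat.add_sub_cancel_left]
      -- The exponent `m - 1` is truncated at `m = 0`, where the factor `m` vanishes.
      cases m with
      | zero => simp
      | succ m =>
        simp only [Nat.add_sub_cancel, mul_zero, sub_zero]
        push_cast
        ring
    refine ((HasDerivAt.fun_sum fun σ (_ : σ ∈ Finset.univ) => hterm σ).const_mul
      (1 / (L.factorial : ℝ))).congr_deriv ?_
    rw [← Finset.mul_sum, Finset.sum_sub_distrib, hsum]
    simp only [Finset.sum_const, Finset.card_univ, Fintype.card_perm, Fintype.card_fin,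
      nsmul_eq_mul]
    field_simp
  refine ⟨hδ, hderiv.deriv, ?_⟩
  rw [hderiv.deriv, hδ]
  field_simp
end

section
/- Let G be a connected simple graph on a finite nonempty vertex set V, and let σ be a permutation of V that can be written as a product σ = τ_t ∘ ⋯ ∘ τ_2 ∘ τ_1 of t transpositions, where each τ_s = swap(a_s, b_s) with a_s and b_s adjacent in G. Then Σ_{v ∈ V} dist_G(v, σ(v)) ≤ 2t, where dist_G denotes the graph distance in G. -/
/-! Induction on the number of swaps. Composing `π` with one more adjacent swap `τ` gives, by the
triangle inequality, `dist v (τ (π v)) ≤ dist v (π v) + dist (π v) (τ (π v))`. Summed over `v` and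
reindexed along the bijection `π`, the second term is the total displacement of `τ` alone, which is
at most `2` since `τ` moves only two vertices, each by distance one
(`sum_dist_swap_le_two`). -/

theorem sum_dist_swap_le_two {V : Type*} [Fintype V] [DecidableEq V] (G : SimpleGraph V)
    {a b : V} (h : G.Adj a b) : ∑ w : V, G.dist w (Equiv.swap a b w) ≤ 2 := by
  calc ∑ w : V, G.dist w (Equiv.swap a b w)
      ≤ ∑ w : V, ((if w = a then 1 else 0) + (if w = b then 1 else 0)) := by
        refine Finset.sum_le_sum fun w _ => ?_
        by_cases ha : w = a
        · subst ha
          simp [SimpleGraph.dist_eq_one_iff_adj.mpr h]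
        · by_cases hb : w = b
          · subst hb
            simp [SimpleGraph.dist_eq_one_iff_adj.mpr h.symm]
          · simp [Equiv.swap_apply_of_ne_of_ne ha hb]
    _ = 2 := by simp [Finset.sum_add_distrib]

/-- If a permutation `σ` of the vertices of a connected graph `G` is a product of `t`
transpositions of adjacent vertices, then the total displacement satisfies
`Σ_v dist_G(v, σ v) ≤ 2t`: each nearest-neighbour swap decreases the total
displacement by at most `2`. -/
theorem total_displacement_le_two_mul_swaps {V : Type*} [Fintype V] [DecidableEq V]
    [Nonempty V] (G : SimpleGraph V) (hG : G.Connected)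
    (l : List (V × V)) (hadj : ∀ p ∈ l, G.Adj p.1 p.2)
    (σ : Equiv.Perm V) (hσ : σ = (l.map fun p => Equiv.swap p.1 p.2).prod) :
    ∑ v : V, G.dist v (σ v) ≤ 2 * l.length := by
  subst hσ
  induction l with
  | nil => simp
  | cons p l ih =>
    have ih' := ih fun q hq => hadj q (List.mem_cons_of_mem _ hq)
    set π := (l.map fun p => Equiv.swap p.1 p.2).prod with hπ
    have hswap := sum_dist_swap_le_two G (hadj p List.mem_cons_self)
    rw [← Equiv.sum_comp π] at hswap
    have htri : ∑ v : V, G.dist v (Equiv.swap p.1 p.2 (π v)) ≤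
        ∑ v : V, G.dist v (π v) + ∑ v : V, G.dist (π v) (Equiv.swap p.1 p.2 (π v)) := by
      rw [← Finset.sum_add_distrib]
      exact Finset.sum_le_sum fun v _ => hG.dist_triangle
    simp only [List.map_cons, List.prod_cons, List.length_cons, Equiv.Perm.mul_apply, ← hπ]
    omega
end

section
/- Let n and d be positive natural numbers and call two points x, y : Fin d → Fin n of the d-dimensional grid adjacent if they differ in exactly one coordinate and in that coordinate by exactly 1. Then every permutation σ of Fin d → Fin n can be written as a product σ = π_t ∘ ⋯ ∘ π_1 of t involutions (layers), each π_s satisfying: for every point v, either π_s(v) = v or v and π_s(v) are adjacent, such that t ≤ (2d - 1) · n and the total number of transpositions Σ_{s=1}^{t} (card of support of π_s) / 2 ≤ ((2d - 1)/2) · n^{d+1}. -/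
/-!
Only the number of layers matters: a layer moves at most `n ^ d` points, so `(2 * d - 1) * n` layers
contain at most `(2 * d - 1) * n * n ^ d / 2` swaps.

The number of layers is bounded by induction on `d`.

*Dimension one.* Odd-even transposition sort sorts a permutation `w` of `Fin n` in `n` rounds.
For a threshold `k`, let `N q` count the `i ≥ q` with `k ≤ w i`. A round leaves `N q` unchanged for
`q` of one parity, and replaces it by `min (N (q - 1)) (N (q + 1) + 1)` for `q` of the other parity.
With `m = n - k`, this gives by induction the lower bound
`N q ≥ min (m, n - q, ⌊(m + m % 2 + t - q) / 2⌋)` after `t` rounds (`tail_sortIter`); at `t = n` it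
forces the permutation to be the identity (`path_routable`).

*Dimension step.* View the grid as `A × B` with `A = Fin n` a line and `B` a grid of one dimension
less. By Kőnig's edge colouring theorem (`exists_edge_colouring`, from Hall's theorem), every
permutation of `A × B` factors as one moving points only along `A`, then one moving them only along
`B`, then one moving them only along `A` (`exists_three_phase`). Each factor is routed in all fibres
in parallel, at a total cost of `n + (2 * d - 1) * n + n = (2 * (d + 1) - 1) * n` layers.
-/

/-- Nearest-neighbour adjacency of the `d`-dimensional cubic grid of side `n`:
two points are adjacent iff they agree in all coordinates but one, where they
differ by exactly `1`. -/
def gridAdj (n d : ℕ) (x y : Fin d → Fin n) : Prop :=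
  ∃ i : Fin d, (∀ j : Fin d, j ≠ i → x j = y j) ∧
    ((x i : ℕ) + 1 = (y i : ℕ) ∨ (y i : ℕ) + 1 = (x i : ℕ))

/-! ### Layers and routing -/

/-- A layer for the adjacency relation `adj`: an involution moving each point to itself or to a
neighbour. -/
def IsLayer {V : Type*} (adj : V → V → Prop) (π : Equiv.Perm V) : Prop :=
  π * π = 1 ∧ ∀ v, π v = v ∨ adj v (π v)

/-- `Routable adj T σ`: the permutation `σ` is a product of exactly `T` layers. -/
def Routable {V : Type*} (adj : V → V → Prop) : ℕ → Equiv.Perm V → Prop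
  | 0, σ => σ = 1
  | T + 1, σ => ∃ π τ, IsLayer adj π ∧ Routable adj T τ ∧ σ = π * τ

theorem Routable.mul {V : Type*} {adj : V → V → Prop} {S T : ℕ} {σ τ : Equiv.Perm V}
    (hσ : Routable adj S σ) (hτ : Routable adj T τ) : Routable adj (S + T) (σ * τ) := by
  induction S generalizing σ with
  | zero =>
    have h : σ = 1 := hσ
    subst h
    simpa using hτ
  | succ S ih =>
    obtain ⟨π, ρ, hπ, hρ, rfl⟩ := hσ
    rw [Nat.add_right_comm]
    exact ⟨π, ρ * τ, hπ, ih hρ, mul_assoc _ _ _⟩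

theorem Routable.exists_list {V : Type*} {adj : V → V → Prop} {T : ℕ} {σ : Equiv.Perm V}
    (h : Routable adj T σ) :
    ∃ l : List (Equiv.Perm V), σ = l.prod ∧ (∀ π ∈ l, IsLayer adj π) ∧ l.length = T := by
  induction T generalizing σ with
  | zero => exact ⟨[], h, by simp, rfl⟩
  | succ T ih =>
    obtain ⟨π, τ, hπ, hτ, rfl⟩ := h
    obtain ⟨l, rfl, hl, rfl⟩ := ih hτ
    exact ⟨π :: l, by simp, by simpa using ⟨hπ, hl⟩, by simp⟩

/-- Routing in parallel: if each fibre `{a} × B` of `V ≃ A × B` embeds `B` with its adjacency, then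
a family of permutations of `B`, each routable in `T` layers, is routable on `V` in `T` layers. -/
theorem Routable.parallel {A B V : Type*} {adjB : B → B → Prop} {adjV : V → V → Prop}
    (e : A × B ≃ V) (he : ∀ a b b', adjB b b' → adjV (e (a, b)) (e (a, b')))
    {T : ℕ} (f : A → Equiv.Perm B) (hf : ∀ a, Routable adjB T (f a)) :
    Routable adjV T (e.permCongr (Equiv.prodCongrRight f)) := by
  induction T generalizing f with
  | zero =>
    have h : ∀ a, f a = 1 := hf
    change _ = _
    ext v
    obtain ⟨⟨a, b⟩, rfl⟩ := e.surjective v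
    simp [h]
  | succ T ih =>
    choose π τ hπ hτ h using hf
    refine ⟨e.permCongr (Equiv.prodCongrRight π), e.permCongr (Equiv.prodCongrRight τ),
      ⟨?_, ?_⟩, ih τ hτ, ?_⟩
    · ext v
      have h1 : ∀ a b, π a (π a b) = b := fun a b => by
        rw [← Equiv.Perm.mul_apply, (hπ a).1, Equiv.Perm.one_apply]
      obtain ⟨⟨a, b⟩, rfl⟩ := e.surjective v
      simp [h1]
    · intro v
      obtain ⟨⟨a, b⟩, rfl⟩ := e.surjective v
      rcases (hπ a).2 b with h1 | h1
      · left; simp [h1]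
      · right; simpa using he a b _ h1
    · ext v
      obtain ⟨⟨a, b⟩, rfl⟩ := e.surjective v
      simp [h]

/-- A permutation of a product with finite second factor which preserves the first coordinate is a
family of permutations of the second factor. -/
theorem exists_eq_prodCongrRight {A B : Type*} [Finite B] (τ : Equiv.Perm (A × B))
    (h : ∀ x, (τ x).1 = x.1) : ∃ f : A → Equiv.Perm B, τ = Equiv.prodCongrRight f := by
  have hinj : ∀ a, Function.Injective (fun b => (τ (a, b)).2) := by
    intro a b b' hb
    have : τ (a, b) = τ (a, b') := Prod.ext (by simp [h]) hb
    simpa using τ.injective this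
  refine ⟨fun a => Equiv.ofBijective _ (Finite.injective_iff_bijective.1 (hinj a)), ?_⟩
  ext x
  · simp [h]
  · simp

/-! ### Kőnig's edge colouring theorem and the three-phase factorization -/

/-- A `k`-regular bipartite multigraph, with edge set `S` and end points given by `s` and `t`, has a
proper edge colouring with `k` colours. Hall's theorem provides a perfect matching, which receives
the last colour; its removal leaves a `(k - 1)`-regular multigraph. -/
theorem exists_edge_colouring {E B : Type*} [Fintype B] [DecidableEq B] [DecidableEq E]
    (s t : E → B) (k : ℕ) (S : Finset E)
    (hs : ∀ b, (S.filter (fun x => s x = b)).card = k)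
    (ht : ∀ b, (S.filter (fun x => t x = b)).card = k) :
    ∃ c : E → ℕ, (∀ x ∈ S, c x < k) ∧
      (∀ x ∈ S, ∀ y ∈ S, c x = c y → s x = s y → x = y) ∧
      (∀ x ∈ S, ∀ y ∈ S, c x = c y → t x = t y → x = y) := by
  induction k generalizing S with
  | zero =>
    have : S = ∅ := by
      ext x
      have h := hs (s x)
      rw [Finset.card_eq_zero, Finset.filter_eq_empty_iff] at h
      simpa using fun hx => h hx rfl
    subst this
    exact ⟨fun _ => 0, by simp⟩
  | succ k ih =>
    have hall : ∃ f : B → B, Function.Injective f ∧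
        ∀ b, f b ∈ (S.filter (fun x => s x = b)).image t := by
      rw [← Finset.all_card_le_biUnion_card_iff_exists_injective]
      intro X
      -- The edges leaving `X` all arrive in its neighbourhood `Y`: double counting.
      set Y := X.biUnion fun b => (S.filter (fun x => s x = b)).image t with hY
      have h1 : (S.filter (fun x => s x ∈ X)).card = X.card * (k + 1) := by
        rw [Finset.card_eq_sum_card_fiberwise (f := s) (t := X) (by intro x; simp),
          Finset.sum_const_nat]
        intro b hb
        rw [← hs b, Finset.filter_filter]
        congr 1
        ext x
        simp only [Finset.mem_filter]
        grind
      have h2 : (S.filter (fun x => t x ∈ Y)).card = Y.card * (k + 1) := by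
        rw [Finset.card_eq_sum_card_fiberwise (f := t) (t := Y) (by intro x; simp),
          Finset.sum_const_nat]
        intro b hb
        rw [← ht b, Finset.filter_filter]
        congr 1
        ext x
        simp only [Finset.mem_filter]
        grind
      have h3 : S.filter (fun x => s x ∈ X) ⊆ S.filter (fun x => t x ∈ Y) := by
        intro x hx
        simp only [Finset.mem_filter] at hx
        simp only [hY, Finset.mem_filter, Finset.mem_biUnion, Finset.mem_image]
        exact ⟨hx.1, s x, hx.2, x, ⟨hx.1, rfl⟩, rfl⟩
      have h4 := Finset.card_le_card h3
      rw [h1, h2] at h4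
      exact Nat.le_of_mul_le_mul_right h4 (Nat.succ_pos k)
    obtain ⟨f, hf, hfm⟩ := hall
    simp only [Finset.mem_image, Finset.mem_filter] at hfm
    choose M hM hMt using hfm
    have hMS : ∀ b, M b ∈ S := fun b => (hM b).1
    have hMs : ∀ b, s (M b) = b := fun b => (hM b).2
    have hfs : Function.Surjective f := Finite.injective_iff_surjective.1 hf
    set S' := S.filter (fun x => M (s x) ≠ x) with hS'
    obtain ⟨c, hc, hcs, hct⟩ := ih S' (by
      intro b
      have : S'.filter (fun x => s x = b) = (S.filter (fun x => s x = b)).erase (M b) := by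
        ext x
        simp only [hS', Finset.mem_filter, Finset.mem_erase]
        grind
      rw [this, Finset.card_erase_of_mem (by simp [hMS, hMs]), hs]
      rfl) (by
      intro b
      obtain ⟨a, rfl⟩ := hfs b
      have : S'.filter (fun x => t x = f a) = (S.filter (fun x => t x = f a)).erase (M a) := by
        ext x
        simp only [hS', Finset.mem_filter, Finset.mem_erase]
        constructor
        · rintro ⟨⟨h1, h2⟩, h3⟩
          exact ⟨fun h => h2 (by rw [h, hMs]), h1, h3⟩
        · rintro ⟨h1, h2, h3⟩
          refine ⟨⟨h2, fun h => h1 ?_⟩, h3⟩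
          have : f (s x) = f a := by rw [← hMt, h, h3]
          rw [← hf this, h]
      rw [this, Finset.card_erase_of_mem (by simp [hMS, hMt]), ht]
      rfl)
    refine ⟨fun x => if M (s x) = x then k else c x, ?_, ?_, ?_⟩
    · intro x hx
      have := hc x
      grind
    · intro x hx y hy
      have := hc x
      have := hc y
      have := hcs x
      grind
    · intro x hx y hy
      have := hc x
      have := hc y
      have := hct x
      have hff : M (s x) = x → M (s y) = y → t x = t y → x = y := by
        intro h1 h2 h3
        have : f (s x) = f (s y) := by rw [← hMt, ← hMt, h1, h2, h3]
        rw [← h1, ← h2, hf this]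
      grind

/-- Every permutation of `Fin n × B` moves points first along `Fin n`, then along `B`, then along
`Fin n`. The first phase sends `x` to the line coordinate `c x` for a proper edge colouring `c` of
the multigraph which has, for each point `x`, an edge from the source to the target
`B`-coordinate of `x`. -/
theorem exists_three_phase {n : ℕ} {B : Type*} [Fintype B] [DecidableEq B]
    (σ : Equiv.Perm (Fin n × B)) :
    ∃ F G H : Equiv.Perm (Fin n × B), σ = H * (G * F) ∧
      (∀ x, (F x).2 = x.2) ∧ (∀ x, (G x).1 = x.1) ∧ (∀ x, (H x).2 = x.2) := by
  have hcard : ∀ b : B,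
      (Finset.univ.filter (fun x : Fin n × B => x.2 = b)).card = n := by
    intro b
    have : Finset.univ.filter (fun x : Fin n × B => x.2 = b) =
        Finset.univ.image (fun a : Fin n => (a, b)) := by
      ext ⟨a, b'⟩
      simp [eq_comm]
    rw [this, Finset.card_image_of_injective _ (Prod.mk_left_injective b)]
    simp
  obtain ⟨c, hc, hs, ht⟩ := exists_edge_colouring (fun x : Fin n × B => x.2)
    (fun x => (σ x).2) n Finset.univ hcard (by
      intro b
      refine Eq.trans ?_ (hcard b)
      exact Finset.card_bij (fun x _ => σ x) (by simp) (by simp)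
        (fun y hy => ⟨σ.symm y, by simpa using hy, by simp⟩))
  have hP : Function.Injective
      (fun x : Fin n × B => ((⟨c x, hc x (Finset.mem_univ _)⟩ : Fin n), x.2)) := by
    intro x y h
    simp only [Prod.mk.injEq, Fin.mk.injEq] at h
    exact hs x (Finset.mem_univ _) y (Finset.mem_univ _) h.1 h.2
  have hQ : Function.Injective
      (fun x : Fin n × B => ((⟨c x, hc x (Finset.mem_univ _)⟩ : Fin n), (σ x).2)) := by
    intro x y h
    simp only [Prod.mk.injEq, Fin.mk.injEq] at h
    exact ht x (Finset.mem_univ _) y (Finset.mem_univ _) h.1 h.2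
  let P : Equiv.Perm (Fin n × B) := Equiv.ofBijective _ (Finite.injective_iff_bijective.1 hP)
  let Q : Equiv.Perm (Fin n × B) := Equiv.ofBijective _ (Finite.injective_iff_bijective.1 hQ)
  refine ⟨P, Q * P⁻¹, σ * Q⁻¹, by simp, fun x => rfl, fun x => ?_, fun x => ?_⟩
  · obtain ⟨y, rfl⟩ := P.surjective x
    rw [Equiv.Perm.mul_apply, Equiv.Perm.inv_def, Equiv.symm_apply_apply]
    rfl
  · obtain ⟨y, rfl⟩ := Q.surjective x
    rw [Equiv.Perm.mul_apply, Equiv.Perm.inv_def, Equiv.symm_apply_apply]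
    rfl

/-! ### Odd-even transposition sort on a line -/

/-- Adjacency on the path `0 - 1 - ⋯ - (n - 1)`. -/
def pathAdj (n : ℕ) (x y : Fin n) : Prop :=
  (x : ℕ) + 1 = y ∨ (y : ℕ) + 1 = x

/-- The exchange performed by round `t` of odd-even transposition sort on the arrangement `w`:
for each `i ≡ t mod 2`, the positions `i` and `i + 1` are swapped if `w (i + 1) < w i`. -/
def sortFun {n : ℕ} (w : Equiv.Perm (Fin n)) (t : ℕ) (i : Fin n) : Fin n :=
  if h : (i : ℕ) % 2 = t % 2 then
    if h1 : (i : ℕ) + 1 < n then if w ⟨i + 1, h1⟩ < w i then ⟨i + 1, h1⟩ else i else i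
  else
    if 0 < (i : ℕ) then
      if w i < w ⟨i - 1, by omega⟩ then ⟨i - 1, by omega⟩ else i
    else i

theorem sortFun_involutive {n : ℕ} (w : Equiv.Perm (Fin n)) (t : ℕ) :
    Function.Involutive (sortFun w t) := by
  rintro ⟨i, hi⟩
  unfold sortFun
  by_cases h : i % 2 = t % 2
  · by_cases h1 : i + 1 < n
    · by_cases h2 : w ⟨i + 1, h1⟩ < w ⟨i, hi⟩
      · have h3 : ¬ (i + 1) % 2 = t % 2 := by omega
        simp [h, h1, h2, h3]
      · simp [h, h1, h2]
    · simp [h, h1]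
  · by_cases h1 : 0 < i
    · by_cases h2 : w ⟨i, hi⟩ < w ⟨i - 1, by omega⟩
      · have h3 : (i - 1) % 2 = t % 2 := by omega
        have h4 : i - 1 + 1 = i := by omega
        simp [h, h1, h2, h3, h4, hi]
      · simp [h, h1, h2]
    · simp [h, h1]

/-- `sortFun` as a permutation. -/
def sortLayer {n : ℕ} (w : Equiv.Perm (Fin n)) (t : ℕ) : Equiv.Perm (Fin n) :=
  (sortFun_involutive w t).toPerm

theorem sortLayer_isLayer {n : ℕ} (w : Equiv.Perm (Fin n)) (t : ℕ) :
    IsLayer (pathAdj n) (sortLayer w t) := by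
  constructor
  · ext i
    simp [sortLayer, sortFun_involutive w t i]
  · intro i
    change sortFun w t i = i ∨ pathAdj n i (sortFun w t i)
    unfold sortFun pathAdj
    split_ifs <;> simp
    omega

/-- The number of positions `i ≥ q` holding a value at least `k`. -/
def tail {n : ℕ} (w : Equiv.Perm (Fin n)) (k q : ℕ) : ℕ :=
  (Finset.univ.filter (fun i : Fin n => q ≤ (i : ℕ) ∧ k ≤ (w i : ℕ))).card

theorem tail_succ {n : ℕ} (w : Equiv.Perm (Fin n)) (k q : ℕ) (hq : q < n) :
    tail w k q = tail w k (q + 1) + if k ≤ (w ⟨q, hq⟩ : ℕ) then 1 else 0 := by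
  unfold tail
  split_ifs with h
  · rw [← Finset.card_insert_of_notMem (a := (⟨q, hq⟩ : Fin n)) (by simp)]
    congr 1
    ext i
    simp only [Finset.mem_filter, Finset.mem_insert, Finset.mem_univ, true_and, Fin.ext_iff]
    constructor
    · intro h1
      omega
    · rintro (h1 | h1)
      · have : i = ⟨q, hq⟩ := Fin.ext h1
        subst this
        exact ⟨le_rfl, h⟩
      · omega
  · rw [add_zero]
    congr 1
    ext i
    simp only [Finset.mem_filter, Finset.mem_univ, true_and]
    constructor
    · rintro ⟨h1, h2⟩
      refine ⟨?_, h2⟩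
      rcases Nat.lt_or_ge q i with h3 | h3
      · exact h3
      · have : i = ⟨q, hq⟩ := Fin.ext (le_antisymm h3 h1)
        subst this
        exact absurd h2 h
    · rintro ⟨h1, h2⟩
      exact ⟨by omega, h2⟩

theorem tail_zero {n : ℕ} (w : Equiv.Perm (Fin n)) (k : ℕ) : tail w k 0 = n - k := by
  have h : tail w k 0 = (Finset.univ.filter (fun i : Fin n => k ≤ (i : ℕ))).card :=
    Finset.card_bij (fun x _ => w x) (by simp) (by simp)
      (fun y hy => ⟨w.symm y, by simpa using hy, by simp⟩)
  rw [h]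
  have h2 := Finset.card_filter_add_card_filter_not (s := (Finset.univ : Finset (Fin n)))
    (fun i : Fin n => (i : ℕ) < k)
  simp only [not_lt, Finset.card_univ, Fintype.card_fin, Fin.card_filter_val_lt] at h2
  omega

theorem le_tail_add {n : ℕ} (w : Equiv.Perm (Fin n)) (k q : ℕ) (hq : q ≤ n) :
    n - k ≤ tail w k q + q := by
  induction q with
  | zero => simp [tail_zero]
  | succ q ih =>
    have h1 := ih (by omega)
    have h2 := tail_succ w k q (by omega)
    split_ifs at h2 <;> omega

/-- Round `t` exchanges no values across the cut before position `q` when `q ≡ t mod 2`. -/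
theorem tail_sort_of_eq {n : ℕ} (w : Equiv.Perm (Fin n)) (t k q : ℕ) (h : q % 2 = t % 2) :
    tail (w * sortLayer w t) k q = tail w k q := by
  have hq : ∀ i : Fin n, q ≤ (i : ℕ) → q ≤ (sortLayer w t i : ℕ) := by
    intro i hi
    change q ≤ (sortFun w t i : ℕ)
    unfold sortFun
    split_ifs <;> (try simp only) <;> omega
  have hinv : ∀ i, sortLayer w t (sortLayer w t i) = i := sortFun_involutive w t
  unfold tail
  refine Finset.card_bij (fun x _ => sortLayer w t x) ?_
    (fun x _ y _ h => (sortLayer w t).injective h) ?_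
  · intro x hx
    simp only [Finset.mem_filter, Finset.mem_univ, true_and] at hx ⊢
    exact ⟨hq x hx.1, hx.2⟩
  · intro y hy
    simp only [Finset.mem_filter, Finset.mem_univ, true_and] at hy
    refine ⟨sortLayer w t y, ?_, hinv y⟩
    simp only [Finset.mem_filter, Finset.mem_univ, true_and]
    exact ⟨hq y hy.1, by simpa only [Equiv.Perm.mul_apply, hinv] using hy.2⟩

/-- Across the cut between `q` and `q + 1` with `q ≡ t mod 2`, round `t` puts the larger of the two
values on the right. -/
theorem tail_sort_of_ne {n : ℕ} (w : Equiv.Perm (Fin n)) (t k q : ℕ) (h : q % 2 = t % 2)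
    (hq : q + 1 < n) :
    tail (w * sortLayer w t) k (q + 1) = tail w k (q + 2) + 1 ∨
      tail (w * sortLayer w t) k (q + 1) = tail w k q := by
  have h0 : (w * sortLayer w t) ⟨q + 1, hq⟩ = max (w ⟨q, by omega⟩) (w ⟨q + 1, hq⟩) := by
    change w (sortFun w t ⟨q + 1, hq⟩) = _
    have h3 : ¬ (q + 1) % 2 = t % 2 := by omega
    unfold sortFun
    by_cases h4 : w ⟨q + 1, hq⟩ < w ⟨q, by omega⟩
    · simp [h3, h4, h4.le]
    · simp [h3, h4, not_lt.1 h4]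
  have h1 := tail_succ (w * sortLayer w t) k (q + 1) hq
  rw [tail_sort_of_eq w t k (q + 2) (by omega), h0] at h1
  have h2 : tail w k (q + 1) = tail w k (q + 2) + _ := tail_succ w k (q + 1) hq
  have h3 := tail_succ w k q (by omega)
  have h5 : ((max (w ⟨q, by omega⟩) (w ⟨q + 1, hq⟩) : Fin n) : ℕ) =
      max (w ⟨q, by omega⟩ : ℕ) (w ⟨q + 1, hq⟩) := by
    simp
  rw [h5] at h1
  split_ifs at h1 h2 h3 <;> omega

/-- The arrangement after the first `t` rounds of odd-even transposition sort. -/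
def sortIter {n : ℕ} (w : Equiv.Perm (Fin n)) : ℕ → Equiv.Perm (Fin n)
  | 0 => w
  | t + 1 => sortIter w t * sortLayer (sortIter w t) t

/-- The progress guarantee of odd-even transposition sort. The correction `(n - k) % 2` aligns the
rounding of the half-integer bound with the parity of the rounds: the bound at `q` improves in
round `t` only if `q ≢ t mod 2`. -/
theorem tail_sortIter {n : ℕ} (w : Equiv.Perm (Fin n)) (k t q : ℕ) (hq : q ≤ n) :
    min (n - k) (min (n - q) ((n - k + (n - k) % 2 + t - q) / 2)) ≤ tail (sortIter w t) k q := by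
  induction t generalizing q with
  | zero =>
    have := le_tail_add w k q hq
    change _ ≤ tail w k q
    omega
  | succ t ih =>
    change _ ≤ tail (sortIter w t * sortLayer (sortIter w t) t) k q
    by_cases h : q % 2 = t % 2
    · rw [tail_sort_of_eq _ _ _ _ h]
      have := ih q hq
      omega
    · rcases Nat.eq_zero_or_pos q with rfl | h0
      · rw [tail_zero]
        omega
      · obtain ⟨p, rfl⟩ : ∃ p, q = p + 1 := ⟨q - 1, by omega⟩
        rcases Nat.lt_or_ge (p + 1) n with hp | hp
        · have h1 := ih p (by omega)
          have h2 := ih (p + 2) (by omega)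
          rcases tail_sort_of_ne (sortIter w t) t k p (by omega) hp with h3 | h3 <;>
          · rw [h3]
            omega
        · omega

theorem sortIter_eq_one {n : ℕ} (w : Equiv.Perm (Fin n)) : sortIter w n = 1 := by
  -- All `n - q` positions `i ≥ q` hold values at least `q`; hence no value lies below its position.
  have hle : ∀ i : Fin n, (i : ℕ) ≤ (sortIter w n i : ℕ) := by
    intro i
    have h1 := tail_sortIter w i n i (by omega)
    have h2 : n - (i : ℕ) ≤ tail (sortIter w n) i i := by omega
    have h3 := tail_succ (sortIter w n) i i i.2
    have h4 : tail (sortIter w n) i (i + 1) ≤ n - (i + 1) := by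
      have h5 : tail (sortIter w n) i (i + 1) ≤ tail (1 : Equiv.Perm (Fin n)) 0 (i + 1) :=
        Finset.card_le_card (Finset.monotone_filter_right _ (by intro x _; simp; omega))
      have h6 : tail (1 : Equiv.Perm (Fin n)) 0 (i + 1) =
          tail (1 : Equiv.Perm (Fin n)) (i + 1) 0 := by
        simp [tail]
      rw [tail_zero] at h6
      omega
    split_ifs at h3 with h7
    · exact h7
    · omega
  have hsum : ∑ i : Fin n, (i : ℕ) = ∑ i : Fin n, (sortIter w n i : ℕ) :=
    (Equiv.sum_comp (sortIter w n) (fun i : Fin n => (i : ℕ))).symm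
  have := (Finset.sum_eq_sum_iff_of_le (fun i _ => hle i)).1 hsum
  ext i
  simpa using (this i (Finset.mem_univ i)).symm

theorem path_routable {n : ℕ} (w : Equiv.Perm (Fin n)) : Routable (pathAdj n) n w := by
  have h : ∀ t, ∃ ρ, Routable (pathAdj n) t ρ ∧ w = sortIter w t * ρ := by
    intro t
    induction t with
    | zero => exact ⟨1, rfl, by simp [sortIter]⟩
    | succ t ih =>
      obtain ⟨ρ, hρ, h⟩ := ih
      have hl := sortLayer_isLayer (sortIter w t) t
      refine ⟨_, ⟨_, ρ, hl, hρ, rfl⟩, ?_⟩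
      rw [sortIter, mul_assoc, ← mul_assoc (sortLayer _ _), hl.1, one_mul]
      exact h
  obtain ⟨ρ, hρ, h⟩ := h n
  rw [sortIter_eq_one, one_mul] at h
  rwa [h]

/-! ### Induction on the dimension -/

theorem grid_routable (n d : ℕ) (hd : 1 ≤ d) (σ : Equiv.Perm (Fin d → Fin n)) :
    Routable (gridAdj n d) ((2 * d - 1) * n) σ := by
  induction d, hd using Nat.le_induction with
  | base =>
    let e : Unit × Fin n ≃ (Fin 1 → Fin n) :=
      (Equiv.punitProd _).trans (Equiv.funUnique (Fin 1) (Fin n)).symm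
    have h := Routable.parallel (adjB := pathAdj n) (adjV := gridAdj n 1) e
      (fun a b b' h => ⟨0, fun j hj => absurd (Subsingleton.elim j 0) hj, h⟩)
      (fun _ => (Equiv.funUnique (Fin 1) (Fin n)).permCongr σ) (fun _ => path_routable _)
    convert h using 1
    · simp
    · ext v i
      obtain ⟨x, rfl⟩ := (Equiv.funUnique (Fin 1) (Fin n)).symm.surjective v
      rw [Subsingleton.elim i 0]
      rfl
  | succ d hd ih =>
    let e : Fin n × (Fin d → Fin n) ≃ (Fin (d + 1) → Fin n) := Fin.consEquiv (fun _ => Fin n)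
    obtain ⟨F, G, H, hσ, hF, hG, hH⟩ := exists_three_phase (e.symm.permCongr σ)
    -- A permutation moving points along the first coordinate only costs `n` layers.
    have line : ∀ τ : Equiv.Perm (Fin n × (Fin d → Fin n)), (∀ x, (τ x).2 = x.2) →
        Routable (gridAdj n (d + 1)) n (e.permCongr τ) := by
      intro τ hτ
      obtain ⟨f, hf⟩ := exists_eq_prodCongrRight ((Equiv.prodComm _ _).permCongr τ)
        (fun x => by simp [hτ])
      have h := Routable.parallel (adjB := pathAdj n) (adjV := gridAdj n (d + 1))
        ((Equiv.prodComm _ _).trans e) (fun a b b' h => ⟨0, fun j hj => by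
          obtain ⟨i, rfl⟩ := Fin.exists_succ_eq.2 hj
          simp [e, Fin.consEquiv], by simpa [e, Fin.consEquiv, pathAdj] using h⟩)
        f (fun b => path_routable _)
      rw [← hf] at h
      convert h using 1
      ext v
      simp
    have slab : Routable (gridAdj n (d + 1)) ((2 * d - 1) * n) (e.permCongr G) := by
      obtain ⟨f, rfl⟩ := exists_eq_prodCongrRight G hG
      refine Routable.parallel (adjB := gridAdj n d) e ?_ f (fun a => ih (f a))
      rintro a b b' ⟨i, h1, h2⟩
      refine ⟨i.succ, fun j hj => ?_, by simpa [e, Fin.consEquiv] using h2⟩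
      refine Fin.cases ?_ (fun j hj => ?_) j hj
      · simp [e, Fin.consEquiv]
      · simpa [e, Fin.consEquiv] using h1 j (fun h => hj (by rw [h]))
    have h := (line H hH).mul (slab.mul (line F hF))
    convert h using 1
    · obtain ⟨k, rfl⟩ : ∃ k, d = k + 1 := ⟨d - 1, by omega⟩
      have h1 : 2 * (k + 1 + 1) - 1 = 2 * k + 3 := by omega
      have h2 : 2 * (k + 1) - 1 = 2 * k + 1 := by omega
      rw [h1, h2]
      ring
    · have h1 : σ = e.permCongr (e.symm.permCongr σ) := by
        ext v
        simp
      rw [h1, hσ]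
      ext v
      simp

/-- Recursive hypercube-sorting upper bound: every permutation of the `d`-dimensional
grid of side `n` (so `L = n^d` sites) is a product of at most `(2d-1)·n` layers of
disjoint nearest-neighbour swaps, using at most `((2d-1)/2)·n^{d+1}` swaps in total. -/
theorem hypercube_sorting_bound (n d : ℕ) (hn : 0 < n) (hd : 0 < d)
    (σ : Equiv.Perm (Fin d → Fin n)) :
    ∃ l : List (Equiv.Perm (Fin d → Fin n)),
      σ = l.prod ∧
      (∀ π ∈ l, π * π = 1) ∧
      (∀ π ∈ l, ∀ v, π v = v ∨ gridAdj n d v (π v)) ∧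
      l.length ≤ (2 * d - 1) * n ∧
      (l.map fun π => (π.support.card : ℚ) / 2).sum ≤
        ((2 * (d : ℚ) - 1) / 2) * (n : ℚ) ^ (d + 1) := by
  obtain ⟨l, h1, h2, h3⟩ := (grid_routable n d hd σ).exists_list
  refine ⟨l, h1, fun π hπ => (h2 π hπ).1, fun π hπ => (h2 π hπ).2, h3.le, ?_⟩
  have h4 : (l.map fun π => (π.support.card : ℚ) / 2).sum ≤
      (l.map fun π => (π.support.card : ℚ) / 2).length • ((n : ℚ) ^ d / 2) := by
    apply List.sum_le_card_nsmul
    intro x hx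
    obtain ⟨π, -, rfl⟩ := List.mem_map.1 hx
    have h5 : π.support.card ≤ n ^ d := by
      simpa using Finset.card_le_univ π.support
    have h6 : (π.support.card : ℚ) ≤ (n : ℚ) ^ d := by exact_mod_cast h5
    linarith
  refine h4.trans (le_of_eq ?_)
  rw [List.length_map, h3, nsmul_eq_mul, Nat.cast_mul, Nat.cast_sub (by omega)]
  push_cast
  ring
end

section
/- Let d ≥ 1 and let μ be the Haar probability measure on the unitary group U(d) of d × d complex matrices. Then for all indices i, j, k, l : Fin d, ∫ U(i,j) · conj(U(k,l)) dμ(U) = (1/d) if i = k and j = l, and 0 otherwise. -/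
/-!
Only left invariance of `μ` is needed. Write `f(i,k) = ∫ U_{ij} conj(U_{kl}) dμ` for fixed `j, l`.
Translating by the diagonal unitary with a single `-1`, at position `i`, gives `f(i,k) = -f(i,k)`
for `i ≠ k`, so the off-diagonal terms vanish. Translating by the permutation matrix of a
transposition shows that `f(i,i)` does not depend on `i`. Finally
`∑ i, f(i,i) = ∫ (U* U)_{lj} dμ = δ_{jl}`, so each of the `d` equal terms is `δ_{jl} / d`.
-/

open MeasureTheory Matrix

/-- The diagonal sign matrix with `-1` at position `i` and `1` elsewhere. -/
noncomputable def signFlip {d : ℕ} (i : Fin d) : Matrix.unitaryGroup (Fin d) ℂ :=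
  ⟨Matrix.diagonal fun a => if a = i then -1 else 1, by
    rw [Matrix.mem_unitaryGroup_iff, Matrix.star_eq_conjTranspose, Matrix.diagonal_conjTranspose,
      Matrix.diagonal_mul_diagonal, ← Matrix.diagonal_one]
    congr 1
    funext a
    by_cases h : a = i <;> simp [h]⟩

/-- The permutation matrix of `σ`, as a unitary. -/
noncomputable def permUnitary {d : ℕ} (σ : Equiv.Perm (Fin d)) : Matrix.unitaryGroup (Fin d) ℂ :=
  ⟨σ.permMatrix ℂ, by
    rw [Matrix.mem_unitaryGroup_iff, Matrix.star_eq_conjTranspose, Matrix.conjTranspose_permMatrix,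
      ← Matrix.permMatrix_mul]
    simp⟩

lemma signFlip_mul_apply {d : ℕ} (i : Fin d) (U : Matrix.unitaryGroup (Fin d) ℂ) (a b : Fin d) :
    ((signFlip i * U : Matrix.unitaryGroup (Fin d) ℂ) : Matrix (Fin d) (Fin d) ℂ) a b
      = (if a = i then -1 else 1) * (U : Matrix (Fin d) (Fin d) ℂ) a b := by
  simp [signFlip, Matrix.diagonal_mul]

lemma permUnitary_mul_apply {d : ℕ} (σ : Equiv.Perm (Fin d)) (U : Matrix.unitaryGroup (Fin d) ℂ)
    (a b : Fin d) :
    ((permUnitary σ * U : Matrix.unitaryGroup (Fin d) ℂ) : Matrix (Fin d) (Fin d) ℂ) a b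
      = (U : Matrix (Fin d) (Fin d) ℂ) (σ a) b := by
  simp [permUnitary, Equiv.Perm.permMatrix, PEquiv.toMatrix_toPEquiv_mul]

/-- The entries of a unitary matrix are continuous and bounded by `1`, so these products are
integrable. -/
lemma integrable_entry_mul_conj {d : ℕ} (μ : Measure (Matrix.unitaryGroup (Fin d) ℂ))
    [IsProbabilityMeasure μ] (i j k l : Fin d) :
    Integrable (fun U : Matrix.unitaryGroup (Fin d) ℂ =>
      (U : Matrix (Fin d) (Fin d) ℂ) i j *
        (starRingEnd ℂ) ((U : Matrix (Fin d) (Fin d) ℂ) k l)) μ := by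
  have hc : ∀ a b : Fin d, Continuous fun U : Matrix.unitaryGroup (Fin d) ℂ =>
      (U : Matrix (Fin d) (Fin d) ℂ) a b := fun a b =>
    continuous_subtype_val.matrix_elem a b
  refine Integrable.of_bound
    ((hc i j).mul (Complex.continuous_conj.comp (hc k l))).aestronglyMeasurable 1
    (Filter.Eventually.of_forall fun U => ?_)
  rw [norm_mul, RCLike.norm_conj]
  exact mul_le_one₀ (entry_norm_bound_of_unitary U.2 i j) (norm_nonneg _)
    (entry_norm_bound_of_unitary U.2 k l)

lemma sum_entry_mul_conj {d : ℕ} (U : Matrix.unitaryGroup (Fin d) ℂ) (j l : Fin d) :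
    ∑ a, (U : Matrix (Fin d) (Fin d) ℂ) a j *
      (starRingEnd ℂ) ((U : Matrix (Fin d) (Fin d) ℂ) a l) = if j = l then 1 else 0 := by
  have h := congrFun (congrFun (Matrix.mem_unitaryGroup_iff'.mp U.2) l) j
  rw [Matrix.mul_apply, Matrix.one_apply] at h
  simpa [Matrix.star_apply, mul_comm, eq_comm] using h

/-- Entrywise first-moment Weingarten formula: for Haar-random `U` in `U(d)`,
`∫ U_{ij} conj(U_{kl}) dμ = δ_{ik} δ_{jl} / d`. -/
theorem weingarten_first_moment (d : ℕ) (hd : 1 ≤ d)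
    (μ : Measure (Matrix.unitaryGroup (Fin d) ℂ))
    [μ.IsHaarMeasure] [IsProbabilityMeasure μ]
    (i j k l : Fin d) :
    (∫ U : Matrix.unitaryGroup (Fin d) ℂ,
        (U : Matrix (Fin d) (Fin d) ℂ) i j *
          (starRingEnd ℂ) ((U : Matrix (Fin d) (Fin d) ℂ) k l) ∂μ)
    = if i = k ∧ j = l then (1 : ℂ) / d else 0 := by
  by_cases hik : i = k
  · subst hik
    have hswap : ∀ a : Fin d,
        (∫ U : Matrix.unitaryGroup (Fin d) ℂ, (U : Matrix (Fin d) (Fin d) ℂ) a j *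
          (starRingEnd ℂ) ((U : Matrix (Fin d) (Fin d) ℂ) a l) ∂μ) =
        ∫ U : Matrix.unitaryGroup (Fin d) ℂ, (U : Matrix (Fin d) (Fin d) ℂ) i j *
          (starRingEnd ℂ) ((U : Matrix (Fin d) (Fin d) ℂ) i l) ∂μ := fun a => by
      rw [← integral_mul_left_eq_self _ (permUnitary (Equiv.swap a i))]
      simp only [permUnitary_mul_apply, Equiv.swap_apply_left]
    have hsum := integral_finsetSum (μ := μ) Finset.univ
      fun a _ => integrable_entry_mul_conj μ a j a l
    simp only [sum_entry_mul_conj, hswap] at hsum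
    have hd0 : (d : ℂ) ≠ 0 := Nat.cast_ne_zero.mpr (by omega)
    simp only [integral_const, probReal_univ, one_smul, Finset.sum_const, Finset.card_univ,
      Fintype.card_fin, nsmul_eq_mul] at hsum
    rw [eq_comm, mul_comm, ← eq_div_iff hd0] at hsum
    rw [hsum]
    by_cases hjl : j = l <;> simp [hjl]
  · rw [if_neg fun h => hik h.1, ← self_eq_neg, ← integral_neg,
      ← integral_mul_left_eq_self _ (signFlip i)]
    simp only [signFlip_mul_apply, if_pos, if_neg (Ne.symm hik), neg_mul, one_mul]
end
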